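/- Let 0 < a < 1, let n ≥ 2 be an integer, and let s > a/4. Then there exists a constant C > 0, independent of f, such that for every radial function f ∈ C_c^∞(ℝⁿ \ {0}) one has ‖S^a f‖_{L²(Bⁿ, L^∞(B))} ≤ C ‖f‖_{H^s(ℝⁿ)}. -/

import Mathlib

open MeasureTheory Real
open scoped InnerProductSpace

noncomputable section

/-- The Fourier transform `f̂(ξ) = ∫ e^{-i x·ξ} f(x) dx` on `ℝⁿ`. -/
def FT (n : ℕ) (f : EuclideanSpace ℝ (Fin n) → ℂ) (ξ : EuclideanSpace ℝ (Fin n)) : ℂ :=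
  ∫ x, Complex.exp (-(Complex.I * ((⟪x, ξ⟫_ℝ : ℝ) : ℂ))) * f x

/-- The oscillatory integral `S^a f(x,t) = (2π)^{-n} ∫ e^{i(x·ξ + t|ξ|^a)} f̂(ξ) dξ`. -/
def Sosc (n : ℕ) (a : ℝ) (f : EuclideanSpace ℝ (Fin n) → ℂ)
    (x : EuclideanSpace ℝ (Fin n)) (t : ℝ) : ℂ :=
  (((2 * π) ^ n : ℝ) : ℂ)⁻¹ *
    ∫ ξ, Complex.exp (Complex.I * ((⟪x, ξ⟫_ℝ + t * ‖ξ‖ ^ a : ℝ) : ℂ)) * FT n f ξ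
open scoped ENNReal ComplexConjugate

theorem norm_integral_cexp_le_of_multiplier {p q : ℝ} (hpq : p ≤ q) {φ φ' ψ ψ' : ℝ → ℝ}
    (hφ : ∀ x ∈ Set.Icc p q, HasDerivAt φ (φ' x) x)
    (hψ : ∀ x ∈ Set.Icc p q, HasDerivAt ψ (ψ' x) x)
    (hφ' : ContinuousOn φ' (Set.Icc p q)) (hψ' : ContinuousOn ψ' (Set.Icc p q)) :
    ‖∫ x in p..q, Complex.exp (Complex.I * (φ x : ℂ))‖ ≤
      |ψ q| + |ψ p| + ∫ x in p..q, (|ψ' x| + |1 - ψ x * φ' x|) := by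
  have hu : Set.uIcc p q = Set.Icc p q := Set.uIcc_of_le hpq
  have cφ : ContinuousOn φ (Set.Icc p q) := fun x hx => (hφ x hx).continuousAt.continuousWithinAt
  have cψ : ContinuousOn ψ (Set.Icc p q) := fun x hx => (hψ x hx).continuousAt.continuousWithinAt
  set e : ℝ → ℂ := fun x => Complex.exp (Complex.I * (φ x : ℂ)) with he
  have ce : ContinuousOn e (Set.Icc p q) := by
    apply Complex.continuous_exp.comp_continuousOn
    exact continuousOn_const.mul (Complex.continuous_ofReal.comp_continuousOn cφ)
  have ne : ∀ x, ‖e x‖ = 1 := fun x => by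
    simp only [he]; rw [mul_comm]; exact Complex.norm_exp_ofReal_mul_I _
  have cφ'C : ContinuousOn (fun x => (φ' x : ℂ)) (Set.Icc p q) :=
    Complex.continuous_ofReal.comp_continuousOn hφ'
  have cψC : ContinuousOn (fun x => (ψ x : ℂ)) (Set.Icc p q) :=
    Complex.continuous_ofReal.comp_continuousOn cψ
  have cψ'C : ContinuousOn (fun x => (ψ' x : ℂ)) (Set.Icc p q) :=
    Complex.continuous_ofReal.comp_continuousOn hψ'
  have hd : ∀ x ∈ Set.uIcc p q, HasDerivAt (fun x => (ψ x : ℂ) * e x)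
      ((ψ' x : ℂ) * e x + (ψ x : ℂ) * (e x * (Complex.I * (φ' x : ℂ)))) x := by
    intro x hx
    rw [hu] at hx
    exact (hψ x hx).ofReal_comp.mul (((hφ x hx).ofReal_comp.const_mul Complex.I).cexp)
  have ci1 : IntervalIntegrable (fun x => (ψ' x : ℂ) * e x + (ψ x : ℂ) * (e x * (Complex.I * (φ' x : ℂ)))) volume p q := by
    apply ContinuousOn.intervalIntegrable
    rw [hu]
    exact (cψ'C.mul ce).add (cψC.mul (ce.mul (continuousOn_const.mul cφ'C)))
  have h1 := intervalIntegral.integral_eq_sub_of_hasDerivAt hd ci1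
  have ci2 : IntervalIntegrable (fun x => (Complex.I * (1 - ψ x * φ' x) - ψ' x) * e x) volume p q := by
    apply ContinuousOn.intervalIntegrable
    rw [hu]
    exact ((continuousOn_const.mul (continuousOn_const.sub (cψC.mul cφ'C))).sub cψ'C).mul ce
  have h2 : Complex.I * ∫ x in p..q, e x = ((ψ q : ℂ) * e q - (ψ p : ℂ) * e p) +
      ∫ x in p..q, (Complex.I * (1 - ψ x * φ' x) - ψ' x) * e x := by
    rw [← h1, ← intervalIntegral.integral_add ci1 ci2, ← intervalIntegral.integral_const_mul]
    congr 1; ext x; ring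
  have h3 : ‖∫ x in p..q, e x‖ = ‖Complex.I * ∫ x in p..q, e x‖ := by simp
  rw [h3, h2]
  refine (norm_add_le _ _).trans (add_le_add ?_ ?_)
  · refine (norm_sub_le _ _).trans ?_
    simp [ne]
  · apply intervalIntegral.norm_integral_le_of_norm_le hpq
    · refine Filter.Eventually.of_forall fun x _ => ?_
      rw [norm_mul, ne, mul_one]
      refine (norm_sub_le _ _).trans ?_
      rw [norm_mul, Complex.norm_I, one_mul, add_comm]
      apply le_of_eq
      congr 1
      · exact Complex.norm_real _
      · rw [← Real.norm_eq_abs, ← Complex.norm_real]; push_cast; rfl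
    · apply ContinuousOn.intervalIntegrable
      rw [hu]
      exact hψ'.abs.add (continuousOn_const.sub (cψ.mul hφ')).abs

theorem norm_integral_cexp_le_of_deriv_ge {p q : ℝ} (hpq : p ≤ q) {φ φ' φ'' : ℝ → ℝ} {l L : ℝ}
    (hφ : ∀ x ∈ Set.Icc p q, HasDerivAt φ (φ' x) x)
    (hφ' : ∀ x ∈ Set.Icc p q, HasDerivAt φ' (φ'' x) x)
    (hφ'' : ContinuousOn φ'' (Set.Icc p q)) (hl : 0 < l)
    (h1 : ∀ x ∈ Set.Icc p q, l ≤ |φ' x|) (h2 : ∀ x ∈ Set.Icc p q, |φ'' x| ≤ L) :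
    ‖∫ x in p..q, Complex.exp (Complex.I * (φ x : ℂ))‖ ≤ 2 / l + L / l ^ 2 * (q - p) := by
  have cφ' : ContinuousOn φ' (Set.Icc p q) := fun x hx => (hφ' x hx).continuousAt.continuousWithinAt
  have hne : ∀ x ∈ Set.Icc p q, φ' x ≠ 0 := fun x hx h => by
    have := h1 x hx; rw [h, abs_zero] at this; linarith
  have key := norm_integral_cexp_le_of_multiplier hpq (ψ := fun x => (φ' x)⁻¹)
    (ψ' := fun x => -φ'' x / φ' x ^ 2) hφ
    (fun x hx => (hφ' x hx).inv (hne x hx)) cφ'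
    (hφ''.neg.div (cφ'.pow 2) fun x hx => pow_ne_zero 2 (hne x hx))
  have hb : ∀ x ∈ Set.Icc p q, |(φ' x)⁻¹| ≤ 1 / l := fun x hx => by
    rw [abs_inv, one_div]; exact inv_anti₀ hl (h1 x hx)
  have h3 : ∫ x in p..q, (|-φ'' x / φ' x ^ 2| + |1 - (φ' x)⁻¹ * φ' x|) ≤ L / l ^ 2 * (q - p) := by
    refine (le_abs_self _).trans ?_
    rw [← Real.norm_eq_abs, ← abs_of_nonneg (sub_nonneg.2 hpq)]
    apply intervalIntegral.norm_integral_le_of_norm_le_const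
    intro x hx
    rw [Set.uIoc_of_le hpq] at hx
    have hx := Set.Ioc_subset_Icc_self hx
    rw [inv_mul_cancel₀ (hne x hx), sub_self, abs_zero, add_zero, Real.norm_eq_abs, abs_abs, abs_div,
      abs_neg, abs_pow]
    have hL := (abs_nonneg _).trans (h2 x hx)
    have := h1 x hx
    gcongr
    exact h2 x hx
  have := hb p ⟨le_rfl, hpq⟩
  have := hb q ⟨hpq, le_rfl⟩
  have e2 : 2 / l = 1 / l + 1 / l := by ring
  rw [e2]
  linarith

theorem norm_integral_cexp_le_of_second_deriv_ge {p q : ℝ} (hpq : p ≤ q) {φ φ' φ'' : ℝ → ℝ} {m : ℝ}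
    (hφ : ∀ x ∈ Set.Icc p q, HasDerivAt φ (φ' x) x)
    (hφ' : ∀ x ∈ Set.Icc p q, HasDerivAt φ' (φ'' x) x)
    (hφ'' : ContinuousOn φ'' (Set.Icc p q)) (hm : 0 < m)
    (h1 : ∀ x ∈ Set.Icc p q, m ≤ φ'' x) :
    ‖∫ x in p..q, Complex.exp (Complex.I * (φ x : ℂ))‖ ≤ 8 / √m := by
  have cφ' : ContinuousOn φ' (Set.Icc p q) := fun x hx => (hφ' x hx).continuousAt.continuousWithinAt
  obtain ⟨r, hr, hr2⟩ : ∃ r, 0 < r ∧ r ^ 2 = m := ⟨√m, Real.sqrt_pos.2 hm, Real.sq_sqrt hm.le⟩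
  have hrm : √m = r := by rw [← hr2]; exact Real.sqrt_sq hr.le
  rw [hrm]
  have hpos : ∀ x, 0 < φ' x ^ 2 + m := fun x => by positivity
  have key := norm_integral_cexp_le_of_multiplier hpq (ψ := fun x => φ' x / (φ' x ^ 2 + m))
    (ψ' := fun x => φ'' x * (m - φ' x ^ 2) / (φ' x ^ 2 + m) ^ 2) hφ
    (fun x hx => by
      refine ((hφ' x hx).div (((hφ' x hx).pow 2).add_const m) (hpos x).ne').congr_deriv ?_
      congr 1
      simp only [Pi.pow_apply]
      push_cast
      ring)
    cφ' ((hφ''.mul (continuousOn_const.sub (cφ'.pow 2))).div (((cφ'.pow 2).add continuousOn_const).pow 2)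
      fun x hx => pow_ne_zero 2 (hpos x).ne')
  have hb : ∀ x, |φ' x / (φ' x ^ 2 + m)| ≤ 1 / (2 * r) := fun x => by
    rw [abs_div, abs_of_pos (hpos x), div_le_div_iff₀ (hpos x) (by positivity), ← hr2, ← sq_abs (φ' x)]
    nlinarith [sq_nonneg (|φ' x| - r)]
  have harc : ∫ x in p..q, 2 * (φ'' x / (φ' x ^ 2 + m)) =
      2 / r * arctan (φ' q / r) - 2 / r * arctan (φ' p / r) := by
    apply intervalIntegral.integral_eq_sub_of_hasDerivAt (f := fun x => 2 / r * arctan (φ' x / r))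
    · intro x hx
      rw [Set.uIcc_of_le hpq] at hx
      refine ((((hφ' x hx).div_const r).arctan).const_mul (2 / r)).congr_deriv ?_
      have := hpos x
      rw [← hr2] at this ⊢
      field_simp
      ring
    · apply ContinuousOn.intervalIntegrable
      rw [Set.uIcc_of_le hpq]
      exact continuousOn_const.mul (hφ''.div ((cφ'.pow 2).add continuousOn_const) fun x _ => (hpos x).ne')
  have hmono : ∫ x in p..q, (|φ'' x * (m - φ' x ^ 2) / (φ' x ^ 2 + m) ^ 2| +
      |1 - φ' x / (φ' x ^ 2 + m) * φ' x|) ≤ ∫ x in p..q, 2 * (φ'' x / (φ' x ^ 2 + m)) := by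
    have c2 : ContinuousOn (fun x => φ' x ^ 2 + m) (Set.Icc p q) := (cφ'.pow 2).add continuousOn_const
    apply intervalIntegral.integral_mono_on hpq
    · apply ContinuousOn.intervalIntegrable
      rw [Set.uIcc_of_le hpq]
      refine ContinuousOn.add (ContinuousOn.abs ?_) (ContinuousOn.abs ?_)
      · exact ((hφ''.mul (continuousOn_const.sub (cφ'.pow 2))).div (c2.pow 2)
          fun x hx => pow_ne_zero 2 (hpos x).ne')
      · exact continuousOn_const.sub ((cφ'.div c2 fun x hx => (hpos x).ne').mul cφ')
    · apply ContinuousOn.intervalIntegrable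
      rw [Set.uIcc_of_le hpq]
      exact continuousOn_const.mul (hφ''.div c2 fun x _ => (hpos x).ne')
    · intro x hx
      have h := hpos x
      have hm1 := h1 x hx
      rw [two_mul]
      apply add_le_add
      · rw [abs_div, abs_mul, abs_of_pos (hm.trans_le hm1), abs_of_pos (pow_pos h 2),
          div_le_div_iff₀ (pow_pos h 2) h]
        have : |m - φ' x ^ 2| ≤ φ' x ^ 2 + m := by
          rw [abs_le]; constructor <;> nlinarith [sq_nonneg (φ' x)]
        have h3 : 0 < φ'' x := hm.trans_le hm1
        calc _ ≤ φ'' x * (φ' x ^ 2 + m) * (φ' x ^ 2 + m) := by gcongr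
          _ = _ := by ring
      · have : 1 - φ' x / (φ' x ^ 2 + m) * φ' x = m / (φ' x ^ 2 + m) := by field_simp; ring
        rw [this, abs_of_pos (by positivity)]
        gcongr
  have a1 := (arctan_lt_pi_div_two (φ' q / r)).le
  have a2 := (neg_pi_div_two_lt_arctan (φ' p / r)).le
  have h5 : 2 / r * arctan (φ' q / r) - 2 / r * arctan (φ' p / r) ≤ 2 / r * 3.15 := by
    rw [← mul_sub]
    gcongr
    have := Real.pi_lt_d2
    linarith
  have b1 := hb p
  have b2 := hb q
  have e8 : 8 / r = 2 / r * 3.15 + (1 / (2 * r) + 1 / (2 * r)) + 0.7 / r := by field_simp; norm_num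
  have : 0 < 0.7 / r := by positivity
  linarith

theorem norm_integral_cexp_neg (p q : ℝ) (φ : ℝ → ℝ) :
    ‖∫ x in p..q, Complex.exp (Complex.I * ((-φ x : ℝ) : ℂ))‖ =
      ‖∫ x in p..q, Complex.exp (Complex.I * (φ x : ℂ))‖ := by
  rw [← Complex.norm_conj (∫ x in p..q, Complex.exp (Complex.I * (φ x : ℂ)))]
  congr 1
  simp only [intervalIntegral]
  rw [map_sub, ← integral_conj, ← integral_conj]
  simp only [← Complex.exp_conj, map_mul, Complex.conj_I, Complex.conj_ofReal, Complex.ofReal_neg,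
    mul_neg, neg_mul]

theorem hasDerivAt_phase {a : ℝ} (X Y : ℝ) {x : ℝ} (hx : 0 < x) :
    HasDerivAt (fun x => X * x + Y * x ^ a) (X + Y * (a * x ^ (a - 1))) x := by
  have h := ((hasDerivAt_id x).const_mul X).add
    ((Real.hasDerivAt_rpow_const (p := a) (Or.inl hx.ne')).const_mul Y)
  rw [mul_one] at h
  exact h

theorem hasDerivAt_deriv_phase {a : ℝ} (X Y : ℝ) {x : ℝ} (hx : 0 < x) :
    HasDerivAt (fun x => X + Y * (a * x ^ (a - 1))) (Y * (a * ((a - 1) * x ^ (a - 2)))) x := by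
  have h := (((Real.hasDerivAt_rpow_const (p := a - 1) (Or.inl hx.ne')).const_mul a).const_mul
    Y).const_add X
  rw [show a - 1 - 1 = a - 2 by ring] at h
  exact h

theorem norm_integral_phase_le_one (X Y a : ℝ) :
    ‖∫ x in (1 : ℝ)..2, Complex.exp (Complex.I * ((X * x + Y * x ^ a : ℝ) : ℂ))‖ ≤ 1 := by
  have := intervalIntegral.norm_integral_le_of_norm_le_const (a := 1) (b := 2) (C := 1)
    (f := fun x : ℝ => Complex.exp (Complex.I * ((X * x + Y * x ^ a : ℝ) : ℂ)))
    (fun x _ => by rw [mul_comm]; exact (Complex.norm_exp_ofReal_mul_I _).le)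
  norm_num at this ⊢
  exact this

theorem norm_integral_phase_le_inv {a X Y : ℝ} (ha : 0 < a) (ha1 : a < 1) (hX : X ≠ 0)
    (hXY : 2 * |Y| ≤ |X|) :
    ‖∫ x in (1 : ℝ)..2, Complex.exp (Complex.I * ((X * x + Y * x ^ a : ℝ) : ℂ))‖ ≤ 8 / |X| := by
  have hX0 : 0 < |X| := abs_pos.2 hX
  have h := norm_integral_cexp_le_of_deriv_ge (p := 1) (q := 2) one_le_two (l := |X| / 2) (L := |X|)
    (fun x hx => hasDerivAt_phase (a := a) X Y (zero_lt_one.trans_le hx.1))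
    (fun x hx => hasDerivAt_deriv_phase (a := a) X Y (zero_lt_one.trans_le hx.1))
    ?_ (by positivity) ?_ ?_
  · refine h.trans (le_of_eq ?_)
    field_simp
    norm_num
  · intro x hx
    have hx0 : x ≠ 0 := (zero_lt_one.trans_le hx.1).ne'
    exact (continuousAt_const.mul (continuousAt_const.mul (continuousAt_const.mul
      (continuousAt_id.rpow_const (Or.inl hx0))))).continuousWithinAt
  · intro x hx
    have h1 : x ^ (a - 1) ≤ 1 := Real.rpow_le_one_of_one_le_of_nonpos hx.1 (by linarith)
    have h0 : 0 < x ^ (a - 1) := Real.rpow_pos_of_pos (zero_lt_one.trans_le hx.1) _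
    have h2 : |Y * (a * x ^ (a - 1))| ≤ |Y| := by
      rw [abs_mul, abs_of_pos (mul_pos ha h0)]
      have := abs_nonneg Y
      have : a * x ^ (a - 1) ≤ 1 := by nlinarith
      nlinarith
    have := abs_sub_abs_le_abs_sub X (-(Y * (a * x ^ (a - 1))))
    rw [abs_neg, sub_neg_eq_add] at this
    linarith
  · intro x hx
    have h1 : x ^ (a - 2) ≤ 1 := Real.rpow_le_one_of_one_le_of_nonpos hx.1 (by linarith)
    have h0 : 0 < x ^ (a - 2) := Real.rpow_pos_of_pos (zero_lt_one.trans_le hx.1) _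
    have h3 : |a * ((a - 1) * x ^ (a - 2))| ≤ 1 := by
      rw [abs_mul, abs_mul, abs_of_pos ha, abs_of_pos h0, abs_of_neg (by linarith : a - 1 < 0)]
      have : -(a - 1) * x ^ (a - 2) ≤ 1 := by nlinarith
      have : 0 ≤ -(a - 1) * x ^ (a - 2) := mul_nonneg (by linarith) h0.le
      nlinarith
    rw [abs_mul]
    have := abs_nonneg Y
    nlinarith

theorem norm_integral_phase_le_sqrt {a X Y : ℝ} (ha : 0 < a) (ha1 : a < 1) (hX : X ≠ 0)
    (hXY : |X| < 2 * |Y|) :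
    ‖∫ x in (1 : ℝ)..2, Complex.exp (Complex.I * ((X * x + Y * x ^ a : ℝ) : ℂ))‖ ≤
      8 / √(a * (1 - a) / 8) / √|X| := by
  have hX0 : 0 < |X| := abs_pos.2 hX
  have h1a : 0 < 1 - a := by linarith
  wlog hY : Y < 0 generalizing X Y
  · have := this (X := -X) (Y := -Y) (by simpa using hX) (by simpa using hXY) (by simpa using hX0) (by
      rcases (not_lt.1 hY).eq_or_lt with h | h
      · rw [← h] at hXY; simp at hXY; linarith [abs_nonneg X]
      · linarith)
    rw [abs_neg] at this
    rw [← norm_integral_cexp_neg]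
    convert this using 7
    ring
  have h := norm_integral_cexp_le_of_second_deriv_ge (p := 1) (q := 2) one_le_two
    (m := a * (1 - a) / 8 * |X|)
    (fun x hx => hasDerivAt_phase (a := a) X Y (zero_lt_one.trans_le hx.1))
    (fun x hx => hasDerivAt_deriv_phase (a := a) X Y (zero_lt_one.trans_le hx.1))
    ?_ (by positivity) ?_
  · refine h.trans (le_of_eq ?_)
    rw [Real.sqrt_mul (by positivity), div_div]
  · intro x hx
    have hx0 : x ≠ 0 := (zero_lt_one.trans_le hx.1).ne'
    exact (continuousAt_const.mul (continuousAt_const.mul (continuousAt_const.mul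
      (continuousAt_id.rpow_const (Or.inl hx0))))).continuousWithinAt
  · intro x hx
    have hx0 := zero_lt_one.trans_le hx.1
    have h1 : 1 / 4 ≤ x ^ (a - 2) := by
      have e1 : (2 : ℝ) ^ (-2 : ℝ) = 1 / 4 := by
        rw [Real.rpow_neg (by norm_num)]; norm_num
      rw [← e1]
      calc (2 : ℝ) ^ (-2 : ℝ) ≤ 2 ^ (a - 2) := by
            apply Real.rpow_le_rpow_of_exponent_le <;> linarith
        _ ≤ x ^ (a - 2) := Real.rpow_le_rpow_of_nonpos hx0 hx.2 (by linarith)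
    rw [abs_of_neg hY] at hXY
    have e : Y * (a * ((a - 1) * x ^ (a - 2))) = a * (1 - a) * (-Y * x ^ (a - 2)) := by ring
    rw [e, div_mul_eq_mul_div, mul_div_assoc]
    gcongr
    nlinarith

theorem exists_norm_integral_phase_le_sqrt {a : ℝ} (ha : 0 < a) (ha1 : a < 1) :
    ∃ C ≥ 8, ∀ X Y : ℝ, X ≠ 0 →
    ‖∫ x in (1 : ℝ)..2, Complex.exp (Complex.I * ((X * x + Y * x ^ a : ℝ) : ℂ))‖ ≤ C / √|X| := by
  have h1a : 0 < 1 - a := by linarith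
  refine ⟨8 + 8 / √(a * (1 - a) / 8), by simp; positivity, fun X Y hX => ?_⟩
  have hX0 : 0 < |X| := abs_pos.2 hX
  have hs : 0 < √|X| := Real.sqrt_pos.2 hX0
  rw [add_div]
  rcases le_or_gt (2 * |Y|) |X| with h | h
  · have : ‖∫ x in (1 : ℝ)..2, Complex.exp (Complex.I * ((X * x + Y * x ^ a : ℝ) : ℂ))‖ ≤ 8 / √|X| := by
      rcases le_or_gt 1 (√|X|) with h1 | h1
      · refine (norm_integral_phase_le_inv ha ha1 hX h).trans ?_
        gcongr
        rw [Real.sqrt_le_left hX0.le]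
        have := (Real.le_sqrt' one_pos).1 h1
        nlinarith
      · refine (norm_integral_phase_le_one X Y a).trans ?_
        rw [le_div_iff₀ hs]
        linarith
    have : 0 ≤ 8 / √(a * (1 - a) / 8) / √|X| := by positivity
    linarith
  · have := norm_integral_phase_le_sqrt ha ha1 hX h
    have : 0 ≤ 8 / √|X| := by positivity
    linarith

theorem exists_norm_dyadic_kernel_le {a : ℝ} (ha : 0 < a) (ha1 : a < 1) {ε : ℝ} (hε : 0 < ε)
    (hε2 : ε ≤ 1 / 2) :
    ∃ C > 0, ∀ N x t : ℝ, 1 ≤ N → x ≠ 0 → |t| ≤ 2 →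
    ‖∫ ρ in N..(2 * N), Complex.exp (Complex.I * ((x * ρ + t * ρ ^ a : ℝ) : ℂ))‖ ≤
      C * N ^ (a / 2 + ε) * |x| ^ (ε - 1) := by
  obtain ⟨C, hC8, hC⟩ := exists_norm_integral_phase_le_sqrt ha ha1
  refine ⟨2 * C, by linarith, fun N x t hN hx ht => ?_⟩
  have hN0 : 0 < N := by linarith
  have hx0 : 0 < |x| := abs_pos.2 hx
  have hsc : ‖∫ ρ in N..(2 * N), Complex.exp (Complex.I * ((x * ρ + t * ρ ^ a : ℝ) : ℂ))‖ =
      N * ‖∫ ρ in (1 : ℝ)..2, Complex.exp (Complex.I * (((x * N) * ρ + (t * N ^ a) * ρ ^ a : ℝ) : ℂ))‖ := by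
    have h := intervalIntegral.smul_integral_comp_mul_left (a := 1) (b := 2)
      (fun ρ : ℝ => Complex.exp (Complex.I * ((x * ρ + t * ρ ^ a : ℝ) : ℂ))) N
    rw [mul_one, mul_comm N 2] at h
    rw [← h, norm_smul, Real.norm_of_nonneg hN0.le]
    congr 2
    apply intervalIntegral.integral_congr
    intro ρ hρ
    rw [Set.uIcc_of_le one_le_two] at hρ
    simp only
    rw [Real.mul_rpow hN0.le (by linarith [hρ.1])]
    congr 4 <;> ring
  rw [hsc]
  have hxN : x * N ≠ 0 := mul_ne_zero hx hN0.ne'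
  have haN : |x * N| = |x| * N := by rw [abs_mul, abs_of_pos hN0]
  set z := N ^ (1 - a) * |x| with hz
  have hz0 : 0 < z := by positivity
  have hzN : z ≤ N * |x| := by
    rw [hz]
    gcongr
    conv_rhs => rw [← Real.rpow_one N]
    exact Real.rpow_le_rpow_of_exponent_le hN (by linarith)
  have e1 : N ^ (a / 2 + ε) * |x| ^ (ε - 1) = N ^ (a / 2) * (N * |x|) ^ ε / |x| := by
    rw [Real.rpow_add hN0, Real.rpow_sub_one hx0.ne', Real.mul_rpow hN0.le hx0.le]
    ring
  rw [mul_assoc, e1]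
  have hzε : z ^ ε ≤ (N * |x|) ^ ε := Real.rpow_le_rpow hz0.le hzN hε.le
  rcases le_or_gt z 4 with h4 | h4
  · have h := hC (x * N) (t * N ^ a) hxN
    have e2 : N / √|x * N| = N ^ (a / 2) * z ^ (1 / 2 : ℝ) / |x| := by
      rw [haN, hz, Real.sqrt_eq_rpow, Real.mul_rpow hx0.le hN0.le,
        Real.mul_rpow (by positivity) hx0.le, ← Real.rpow_mul hN0.le, ← mul_assoc,
        ← Real.rpow_add hN0, div_eq_div_iff (by positivity) hx0.ne']
      have e3 : a / 2 + (1 - a) * (1 / 2) = 1 / 2 := by ring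
      rw [e3]
      have := Real.rpow_add hN0 (1 / 2) (1 / 2)
      have h2 := Real.rpow_add hx0 (1 / 2) (1 / 2)
      norm_num at this h2
      calc N * |x| = (N ^ (1 / 2 : ℝ) * N ^ (1 / 2 : ℝ)) * (|x| ^ (1 / 2 : ℝ) * |x| ^ (1 / 2 : ℝ)) := by
            norm_num; rw [← this, ← h2]
        _ = _ := by ring
    have h5 : z ^ (1 / 2 : ℝ) ≤ 2 * (N * |x|) ^ ε := by
      have : z ^ (1 / 2 : ℝ) = z ^ (1 / 2 - ε) * z ^ ε := by
        rw [← Real.rpow_add hz0]; congr 1; ring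
      rw [this]
      have h6 : z ^ (1 / 2 - ε) ≤ 2 := by
        calc z ^ (1 / 2 - ε) ≤ 4 ^ (1 / 2 - ε) := Real.rpow_le_rpow hz0.le h4 (by linarith)
          _ ≤ (4 : ℝ) ^ (1 / 2 : ℝ) :=
            Real.rpow_le_rpow_of_exponent_le (by norm_num) (by linarith)
          _ = 2 := by
            rw [← Real.sqrt_eq_rpow, show (4 : ℝ) = 2 ^ 2 by norm_num]
            exact Real.sqrt_sq (by norm_num)
      have := Real.rpow_nonneg hz0.le ε
      gcongr
    calc N * _ ≤ N * (C / √|x * N|) := by gcongr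
      _ = C * (N / √|x * N|) := by ring
      _ = C * (N ^ (a / 2) * z ^ (1 / 2 : ℝ) / |x|) := by rw [e2]
      _ ≤ C * (N ^ (a / 2) * (2 * (N * |x|) ^ ε) / |x|) := by gcongr
      _ = _ := by ring
  · have h := norm_integral_phase_le_inv ha ha1 (Y := t * N ^ a) hxN (by
      rw [haN, abs_mul, abs_of_pos (Real.rpow_pos_of_pos hN0 a)]
      have e3 : N = N ^ (1 - a) * N ^ a := by rw [← Real.rpow_add hN0]; norm_num
      calc 2 * (|t| * N ^ a) ≤ 2 * (2 * N ^ a) := by gcongr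
        _ = 4 * N ^ a := by ring
        _ ≤ z * N ^ a := by gcongr
        _ = |x| * (N ^ (1 - a) * N ^ a) := by rw [hz]; ring
        _ = _ := by rw [← e3])
    have h1 : 1 ≤ (N * |x|) ^ ε := by
      apply Real.one_le_rpow _ hε.le
      linarith
    have h2 : 1 ≤ N ^ (a / 2) := Real.one_le_rpow hN (by linarith)
    calc N * _ ≤ N * (8 / |x * N|) := by gcongr
      _ = 8 * (1 * 1 / |x|) := by rw [haN]; field_simp
      _ ≤ (2 * C) * (N ^ (a / 2) * (N * |x|) ^ ε / |x|) := by
        gcongr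
        linarith

/-- An `L²` bound by the `TT*` method and Schur's test. -/
theorem integral_norm_sq_le_of_kernel {X Y : Type*} [MeasurableSpace X] [MeasurableSpace Y]
    (μ : Measure X) (ν : Measure Y) [IsFiniteMeasure μ] [IsFiniteMeasure ν]
    {e : X → Y → ℂ} (he : Measurable (Function.uncurry e)) (he1 : ∀ x y, ‖e x y‖ ≤ 1)
    {g : Y → ℂ} (hg : Measurable g) (hgi : Integrable g ν) (hg2 : Integrable (fun y => ‖g y‖ ^ 2) ν)
    {G : X → X → ℝ≥0∞} (hG : Measurable (Function.uncurry G)) (hGs : ∀ x x', G x x' = G x' x)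
    {A : ℝ} (hA : 0 < A) (hGA : ∀ᵐ x ∂μ, ∫⁻ x', G x x' ∂μ ≤ ENNReal.ofReal A)
    (hK : ∀ x x', ‖∫ y, e x y * conj (e x' y) ∂ν‖ₑ ≤ G x x') :
    ∫⁻ x, ‖∫ y, e x y * g y ∂ν‖ₑ ^ 2 ∂μ ≤ ENNReal.ofReal (2 * A) * ∫⁻ y, ‖g y‖ₑ ^ 2 ∂ν := by
  set F : X → ℂ := fun x => ∫ y, e x y * g y ∂ν with hF
  set Q : Y → ℂ := fun y => ∫ x, conj (e x y) * F x ∂μ with hQ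
  set B := ∫ y, ‖g y‖ ∂ν with hB
  have mconj : Measurable (conj : ℂ → ℂ) := Complex.continuous_conj.measurable
  have mF : Measurable F := by
    have : StronglyMeasurable (Function.uncurry fun x y => e x y * g y) :=
      (he.mul (hg.comp measurable_snd)).stronglyMeasurable
    exact this.integral_prod_right.measurable
  have mQ : Measurable Q := by
    have : StronglyMeasurable (Function.uncurry fun y x => conj (e x y) * F x) :=
      ((mconj.comp (he.comp measurable_swap)).mul (mF.comp measurable_snd)).stronglyMeasurable
    exact this.integral_prod_right.measurable
  have bF : ∀ x, ‖F x‖ ≤ B := fun x => by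
    refine norm_integral_le_of_norm_le hgi.norm (Filter.Eventually.of_forall fun y => ?_)
    rw [norm_mul]
    exact mul_le_of_le_one_left (norm_nonneg _) (he1 x y)
  have hB0 : 0 ≤ B := integral_nonneg fun _ => norm_nonneg _
  have bQ : ∀ y, ‖Q y‖ ≤ B * μ.real Set.univ := fun y => by
    refine norm_integral_le_of_norm_le_const (Filter.Eventually.of_forall fun x => ?_)
    rw [norm_mul, RCLike.norm_conj]
    exact (mul_le_of_le_one_left (norm_nonneg _) (he1 x y)).trans (bF x)
  have iF2 : Integrable (fun x => ‖F x‖ ^ 2) μ := by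
    refine Integrable.of_bound (mF.norm.pow_const 2).aestronglyMeasurable (B ^ 2)
      (Filter.Eventually.of_forall fun x => ?_)
    rw [norm_pow, norm_norm]
    have := bF x
    gcongr
  have iQ2 : Integrable (fun y => ‖Q y‖ ^ 2) ν := by
    refine Integrable.of_bound (mQ.norm.pow_const 2).aestronglyMeasurable ((B * μ.real Set.univ) ^ 2)
      (Filter.Eventually.of_forall fun x => ?_)
    rw [norm_pow, norm_norm]
    have := bQ x
    gcongr
  have iQg : Integrable (fun y => conj (Q y) * g y) ν := by
    refine (hgi.norm.const_mul (B * μ.real Set.univ)).mono'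
      ((mconj.comp mQ).mul hg).aestronglyMeasurable (Filter.Eventually.of_forall fun y => ?_)
    rw [norm_mul, RCLike.norm_conj]
    have := bQ y
    gcongr
  have h1 : ∫ y, conj (Q y) * g y ∂ν = ((∫ x, ‖F x‖ ^ 2 ∂μ : ℝ) : ℂ) := by
    have e1 : ∀ y, conj (Q y) * g y = ∫ x, e x y * g y * conj (F x) ∂μ := fun y => by
      rw [hQ]
      simp only
      rw [← integral_conj, ← integral_mul_const]
      congr 1; ext x
      simp; ring
    simp_rw [e1]
    rw [integral_integral_swap]
    · rw [← integral_complex_ofReal]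
      congr 1; ext x
      rw [integral_mul_const, Complex.ofReal_pow, ← Complex.mul_conj']
    · have : Integrable (fun z : Y × X => ‖g z.1‖ * B) (ν.prod μ) :=
        (hgi.norm.comp_fst μ).mul_const B
      refine this.mono' ?_ (Filter.Eventually.of_forall fun z => ?_)
      · exact (((he.comp measurable_swap).mul (hg.comp measurable_fst)).mul
          (mconj.comp (mF.comp measurable_snd))).aestronglyMeasurable
      · simp only [Function.uncurry]
        rw [norm_mul, norm_mul, RCLike.norm_conj]
        have := bF z.2
        have := mul_le_of_le_one_left (norm_nonneg (g z.1)) (he1 z.2 z.1)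
        gcongr
  have h2 : ((∫ y, ‖Q y‖ ^ 2 ∂ν : ℝ) : ℂ) =
      ∫ z : X × X, conj (F z.1) * F z.2 * ∫ y, e z.1 y * conj (e z.2 y) ∂ν ∂(μ.prod μ) := by
    have e1 : ∀ y, ((‖Q y‖ ^ 2 : ℝ) : ℂ) =
        ∫ z : X × X, conj (F z.1) * F z.2 * (e z.1 y * conj (e z.2 y)) ∂(μ.prod μ) := fun y => by
      rw [Complex.ofReal_pow, ← Complex.mul_conj', mul_comm]
      conv_lhs => simp only [hQ]
      rw [← integral_conj, ← integral_prod_mul]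
      congr 1; ext z
      simp; ring
    rw [← integral_complex_ofReal]
    simp_rw [e1, ← integral_const_mul]
    rw [integral_integral_swap]
    refine Integrable.of_bound (C := B * B * (1 * 1)) ?_ (Filter.Eventually.of_forall fun z => ?_)
    · have m1 : Measurable fun z : Y × (X × X) => z.2.1 := by fun_prop
      have m2 : Measurable fun z : Y × (X × X) => z.2.2 := by fun_prop
      have m3 : Measurable fun z : Y × (X × X) => e z.2.1 z.1 :=
        he.comp (m1.prodMk measurable_fst)
      have m4 : Measurable fun z : Y × (X × X) => e z.2.2 z.1 :=
        he.comp (m2.prodMk measurable_fst)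
      exact (((mconj.comp (mF.comp m1)).mul (mF.comp m2)).mul
        (m3.mul (mconj.comp m4))).aestronglyMeasurable
    · simp only [Function.uncurry, norm_mul, RCLike.norm_conj]
      have := bF z.2.1
      have := bF z.2.2
      have := he1 z.2.1 z.1
      have := he1 z.2.2 z.1
      gcongr
  have eI : ENNReal.ofReal (∫ x, ‖F x‖ ^ 2 ∂μ) = ∫⁻ x, ‖F x‖ₑ ^ 2 ∂μ := by
    rw [ofReal_integral_eq_lintegral_ofReal iF2 (Filter.Eventually.of_forall fun x => by positivity)]
    congr 1; ext x
    rw [ENNReal.ofReal_pow (norm_nonneg _), ofReal_norm]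
  have hI0 : 0 ≤ ∫ x, ‖F x‖ ^ 2 ∂μ := integral_nonneg fun _ => by positivity
  have h3 : ∫ y, ‖Q y‖ ^ 2 ∂ν ≤ 2 * A * ∫ x, ‖F x‖ ^ 2 ∂μ := by
    rw [← ENNReal.ofReal_le_ofReal_iff (by positivity)]
    have hJ0 : 0 ≤ ∫ y, ‖Q y‖ ^ 2 ∂ν := integral_nonneg fun _ => by positivity
    have mFG : Measurable fun z : X × X => ‖F z.1‖ₑ ^ 2 * G z.1 z.2 :=
      ((mF.comp measurable_fst).enorm.pow_const 2).mul hG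
    have hx1 : ∫⁻ z : X × X, ‖F z.1‖ₑ ^ 2 * G z.1 z.2 ∂(μ.prod μ) ≤
        ENNReal.ofReal A * ∫⁻ x, ‖F x‖ₑ ^ 2 ∂μ := by
      rw [lintegral_prod _ mFG.aemeasurable,
        ← lintegral_const_mul _ (mF.enorm.pow_const 2)]
      refine lintegral_mono_ae (hGA.mono fun x hx => ?_)
      have mGx : Measurable (G x) := hG.comp measurable_prodMk_left
      simp only
      rw [lintegral_const_mul _ mGx, mul_comm]
      gcongr
    have hx2 : ∫⁻ z : X × X, ‖F z.2‖ₑ ^ 2 * G z.1 z.2 ∂(μ.prod μ) ≤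
        ENNReal.ofReal A * ∫⁻ x, ‖F x‖ₑ ^ 2 ∂μ := by
      rw [← lintegral_prod_swap]
      simpa only [Prod.fst_swap, Prod.snd_swap, hGs] using hx1
    calc ENNReal.ofReal (∫ y, ‖Q y‖ ^ 2 ∂ν) = ‖((∫ y, ‖Q y‖ ^ 2 ∂ν : ℝ) : ℂ)‖ₑ := by
          rw [← ofReal_norm, Complex.norm_real, Real.norm_of_nonneg hJ0]
      _ ≤ ∫⁻ z : X × X, (‖F z.1‖ₑ ^ 2 * G z.1 z.2 + ‖F z.2‖ₑ ^ 2 * G z.1 z.2) ∂(μ.prod μ) := by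
          rw [h2]
          refine (enorm_integral_le_lintegral_enorm _).trans (lintegral_mono fun z => ?_)
          rw [enorm_mul, enorm_mul, ← add_mul]
          have : ‖(conj (F z.1) : ℂ)‖ₑ = ‖F z.1‖ₑ := by
            rw [← ofReal_norm, RCLike.norm_conj, ofReal_norm]
          rw [this]
          refine mul_le_mul' ?_ (hK _ _)
          rcases le_total ‖F z.1‖ₑ ‖F z.2‖ₑ with h | h
          · refine le_add_left ?_
            rw [sq]
            gcongr
          · refine le_add_right ?_
            rw [sq]
            gcongr
      _ ≤ ENNReal.ofReal A * ∫⁻ x, ‖F x‖ₑ ^ 2 ∂μ + ENNReal.ofReal A * ∫⁻ x, ‖F x‖ₑ ^ 2 ∂μ := by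
          rw [lintegral_add_left mFG]
          exact add_le_add hx1 hx2
      _ = _ := by
          rw [← eI, ← two_mul, mul_assoc, ENNReal.ofReal_mul zero_le_two, ENNReal.ofReal_mul hA.le]
          simp
  have h4 : 0 ≤ (2 * A) ^ 2 * ∫ y, ‖g y‖ ^ 2 ∂ν - 2 * (2 * A) * ∫ x, ‖F x‖ ^ 2 ∂μ +
      ∫ y, ‖Q y‖ ^ 2 ∂ν := by
    have h5 : ∫ x, ‖F x‖ ^ 2 ∂μ = ∫ y, (conj (Q y) * g y).re ∂ν := by
      have := integral_re iQg
      simp only [RCLike.re_to_complex] at this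
      rw [this, h1, Complex.ofReal_re]
    have iQr : Integrable (fun y => (conj (Q y) * g y).re) ν := iQg.re
    have iD : Integrable (fun y => (2 * A) ^ 2 * ‖g y‖ ^ 2 -
        2 * (2 * A) * (conj (Q y) * g y).re) ν := (hg2.const_mul _).sub (iQr.const_mul _)
    rw [h5, ← integral_const_mul, ← integral_const_mul, ← integral_sub (hg2.const_mul _)
      (iQr.const_mul _), ← integral_add iD iQ2]
    refine integral_nonneg fun y => ?_
    have : (2 * A) ^ 2 * ‖g y‖ ^ 2 - 2 * (2 * A) * (conj (Q y) * g y).re + ‖Q y‖ ^ 2 =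
        ‖((2 * A : ℝ) : ℂ) * g y - Q y‖ ^ 2 := by
      rw [← Complex.normSq_eq_norm_sq, ← Complex.normSq_eq_norm_sq, ← Complex.normSq_eq_norm_sq,
        Complex.normSq_apply, Complex.normSq_apply, Complex.normSq_apply]
      simp
      ring
    simp only [Pi.zero_apply]
    rw [this]
    positivity
  have h6 : 2 * A * ∫ x, ‖F x‖ ^ 2 ∂μ ≤ 2 * A * (2 * A * ∫ y, ‖g y‖ ^ 2 ∂ν) := by nlinarith
  have h7 := le_of_mul_le_mul_left h6 (by positivity)
  have eJ : ENNReal.ofReal (∫ y, ‖g y‖ ^ 2 ∂ν) = ∫⁻ y, ‖g y‖ₑ ^ 2 ∂ν := by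
    rw [ofReal_integral_eq_lintegral_ofReal hg2 (Filter.Eventually.of_forall fun x => by positivity)]
    congr 1; ext x
    rw [ENNReal.ofReal_pow (norm_nonneg _), ofReal_norm]
  rw [← eI, ← eJ, ← ENNReal.ofReal_mul (by positivity)]
  exact ENNReal.ofReal_le_ofReal h7

theorem lintegral_rpow_abs_sub_le {β : ℝ} (hβ : -1 < β) :
    ∃ M > 0, ∀ x ∈ Set.Ioo (0 : ℝ) 1,
      ∫⁻ x' in Set.Ioo (0 : ℝ) 1, ENNReal.ofReal (|x - x'| ^ β) ≤ ENNReal.ofReal M := by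
  have h0 : IntegrableOn (fun y : ℝ => |y| ^ β) (Set.Ioo (-1) 1) := by
    have h1 : IntervalIntegrable (fun y : ℝ => |y| ^ β) volume 0 1 := by
      refine (intervalIntegral.intervalIntegrable_rpow' (a := 0) (b := 1) hβ).congr ?_
      intro y hy
      rw [Set.uIoc_of_le zero_le_one] at hy
      simp only [abs_of_pos hy.1]
    have h2 : IntervalIntegrable (fun y : ℝ => |y| ^ β) volume (-1) 0 := by
      have := (IntervalIntegrable.iff_comp_neg).1 h1
      simp only [abs_neg, neg_zero] at this
      exact this.symm
    have h3 := h2.trans h1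
    rw [intervalIntegrable_iff_integrableOn_Ioo_of_le (by norm_num)] at h3
    exact h3
  have h0' : ∫⁻ y in Set.Ioo (-1 : ℝ) 1, ENNReal.ofReal (|y| ^ β) ≠ ∞ := by
    have := h0.lintegral_lt_top
    exact this.ne
  refine ⟨(∫⁻ y in Set.Ioo (-1 : ℝ) 1, ENNReal.ofReal (|y| ^ β)).toReal + 1, by positivity,
    fun x hx => ?_⟩
  calc ∫⁻ x' in Set.Ioo (0 : ℝ) 1, ENNReal.ofReal (|x - x'| ^ β)
      = ∫⁻ x', (Set.Ioo (0 : ℝ) 1).indicator (fun x' => ENNReal.ofReal (|x - x'| ^ β)) x' := by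
        rw [lintegral_indicator measurableSet_Ioo]
    _ ≤ ∫⁻ x', (Set.Ioo (-1 : ℝ) 1).indicator (fun y => ENNReal.ofReal (|y| ^ β)) (x - x') := by
        refine lintegral_mono fun x' => ?_
        by_cases h : x' ∈ Set.Ioo (0 : ℝ) 1
        · have h' : x - x' ∈ Set.Ioo (-1 : ℝ) 1 := ⟨by linarith [hx.1, h.2], by linarith [hx.2, h.1]⟩
          rw [Set.indicator_of_mem h, Set.indicator_of_mem h']
        · rw [Set.indicator_of_notMem h]; exact zero_le
    _ = ∫⁻ y in Set.Ioo (-1 : ℝ) 1, ENNReal.ofReal (|y| ^ β) := by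
        rw [lintegral_sub_left_eq_self
          (fun y => (Set.Ioo (-1 : ℝ) 1).indicator (fun y => ENNReal.ofReal (|y| ^ β)) y) x,
          lintegral_indicator measurableSet_Ioo]
    _ ≤ _ := by
        rw [ENNReal.le_ofReal_iff_toReal_le h0' (by positivity)]
        linarith

/-- The oscillating factor `e^{i(κrρ + τ(r)ρ^a)}`. -/
def osc (a κ : ℝ) (τ : ℝ → ℝ) (r ρ : ℝ) : ℂ :=
  Complex.exp (Complex.I * ((κ * r * ρ + τ r * ρ ^ a : ℝ) : ℂ))

theorem norm_osc (a κ : ℝ) (τ : ℝ → ℝ) (r ρ : ℝ) : ‖osc a κ τ r ρ‖ = 1 := by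
  rw [osc, mul_comm, Complex.norm_exp_ofReal_mul_I]

theorem measurable_osc (a κ : ℝ) {τ : ℝ → ℝ} (hτ : Measurable τ) :
    Measurable (Function.uncurry (osc a κ τ)) := by
  unfold osc Function.uncurry
  have : Measurable fun z : ℝ × ℝ => τ z.1 := hτ.comp measurable_fst
  fun_prop

theorem osc_mul_conj (a κ : ℝ) (τ : ℝ → ℝ) (r r' ρ : ℝ) :
    osc a κ τ r ρ * conj (osc a κ τ r' ρ) =
      Complex.exp (Complex.I * (((κ * (r - r')) * ρ + (τ r - τ r') * ρ ^ a : ℝ) : ℂ)) := by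
  rw [osc, osc, ← Complex.exp_conj, ← Complex.exp_add, map_mul, Complex.conj_I, Complex.conj_ofReal]
  congr 1
  push_cast
  ring

theorem exists_lintegral_dyadic_le {a : ℝ} (ha : 0 < a) (ha1 : a < 1) {ε : ℝ} (hε : 0 < ε)
    (hε2 : ε ≤ 1 / 2) :
    ∃ C > 0, ∀ κ : ℝ, |κ| = 1 → ∀ τ : ℝ → ℝ, Measurable τ → (∀ r, |τ r| ≤ 1) →
      ∀ g : ℝ → ℂ, Continuous g → ∀ N : ℝ, 1 ≤ N →
      ∫⁻ r in Set.Ioo (0 : ℝ) 1, ‖∫ ρ in Set.Ioc N (2 * N), osc a κ τ r ρ * g ρ‖ₑ ^ 2 ≤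
        ENNReal.ofReal (C * N ^ (a / 2 + ε)) * ∫⁻ ρ in Set.Ioc N (2 * N), ‖g ρ‖ₑ ^ 2 := by
  obtain ⟨C, hC, hK⟩ := exists_norm_dyadic_kernel_le ha ha1 hε hε2
  obtain ⟨M, hM, hM'⟩ := lintegral_rpow_abs_sub_le (β := ε - 1) (by linarith)
  refine ⟨2 * (C * M), by positivity, fun κ hκ τ hτ hτ1 g hg N hN => ?_⟩
  have hN0 : 0 < N := by linarith
  have hA : 0 < C * N ^ (a / 2 + ε) * M := by positivity
  have key := integral_norm_sq_le_of_kernel (volume.restrict (Set.Ioo (0 : ℝ) 1))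
    (volume.restrict (Set.Ioc N (2 * N))) (measurable_osc a κ hτ)
    (fun r ρ => (norm_osc a κ τ r ρ).le) hg.measurable
    (hg.integrableOn_Ioc) ((hg.norm.pow 2).integrableOn_Ioc)
    (G := fun x x' => if x = x' then ∞ else
      ENNReal.ofReal (C * N ^ (a / 2 + ε)) * ENNReal.ofReal (|x - x'| ^ (ε - 1))) ?_ ?_ hA ?_ ?_
  · convert key using 3
    ring
  · refine Measurable.ite (measurableSet_eq_fun measurable_fst measurable_snd) measurable_const ?_
    fun_prop
  · intro x x'
    simp only [eq_comm (a := x), abs_sub_comm x]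
  · refine (ae_restrict_iff' measurableSet_Ioo).2 (Filter.Eventually.of_forall fun x hx => ?_)
    have : ∫⁻ x' in Set.Ioo (0 : ℝ) 1, (if x = x' then ∞ else
      ENNReal.ofReal (C * N ^ (a / 2 + ε)) * ENNReal.ofReal (|x - x'| ^ (ε - 1))) =
      ∫⁻ x' in Set.Ioo (0 : ℝ) 1, 
        ENNReal.ofReal (C * N ^ (a / 2 + ε)) * ENNReal.ofReal (|x - x'| ^ (ε - 1)) := by
      refine lintegral_congr_ae (ae_restrict_of_ae ?_)
      have : ∀ᵐ x' : ℝ, x' ≠ x := by simp [ae_iff, measure_singleton]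
      filter_upwards [this] with x' hx'
      rw [if_neg hx'.symm]
    rw [this, lintegral_const_mul _ (by fun_prop), ENNReal.ofReal_mul (q := M) (by positivity)]
    exact mul_le_mul' le_rfl (hM' x hx)
  · intro x x'
    by_cases h : x = x'
    · simp [h]
    · simp only [if_neg h]
      rw [← ENNReal.ofReal_mul (by positivity), ← ofReal_norm]
      refine ENNReal.ofReal_le_ofReal ?_
      simp only [osc_mul_conj]
      rw [← intervalIntegral.integral_of_le (by linarith)]
      have h1 : κ * (x - x') ≠ 0 := mul_ne_zero (by rintro rfl; simp at hκ) (sub_ne_zero.2 h)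
      have := hK N (κ * (x - x')) (τ x - τ x') hN h1
        ((abs_sub _ _).trans (by linarith [hτ1 x, hτ1 x']))
      rwa [abs_mul, hκ, one_mul] at this

theorem sq_lintegral_mul_le {X : Type*} [MeasurableSpace X] (μ : Measure X) {f g : X → ℝ≥0∞}
    (hf : AEMeasurable f μ) (hg : AEMeasurable g μ) :
    (∫⁻ x, f x * g x ∂μ) ^ 2 ≤ (∫⁻ x, f x ^ 2 ∂μ) * ∫⁻ x, g x ^ 2 ∂μ := by
  have h := ENNReal.lintegral_mul_le_Lp_mul_Lq μ Real.HolderConjugate.two_two hf hg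
  simp only [Pi.mul_apply, ENNReal.rpow_two] at h
  calc (∫⁻ x, f x * g x ∂μ) ^ 2
      ≤ ((∫⁻ x, f x ^ 2 ∂μ) ^ (1 / 2 : ℝ) * (∫⁻ x, g x ^ 2 ∂μ) ^ (1 / 2 : ℝ)) ^ 2 := by gcongr
    _ = _ := by
      rw [mul_pow, ← ENNReal.rpow_natCast, ← ENNReal.rpow_natCast, ← ENNReal.rpow_mul,
        ← ENNReal.rpow_mul]
      norm_num

theorem sq_tsum_mul_le (f g : ℕ → ℝ≥0∞) :
    (∑' k, f k * g k) ^ 2 ≤ (∑' k, f k ^ 2) * ∑' k, g k ^ 2 := by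
  have := sq_lintegral_mul_le Measure.count (f := f) (g := g)
    (measurable_of_countable _).aemeasurable (measurable_of_countable _).aemeasurable
  simpa only [lintegral_count] using this

theorem sq_tsum_le (c b : ℕ → ℝ≥0∞) (hc : ∀ k, c k ≠ 0) (hc' : ∀ k, c k ≠ ∞) :
    (∑' k, b k) ^ 2 ≤ (∑' k, c k) * ∑' k, (c k)⁻¹ * b k ^ 2 := by
  have h := sq_tsum_mul_le (fun k => c k ^ (1 / 2 : ℝ)) (fun k => (c k)⁻¹ ^ (1 / 2 : ℝ) * b k)
  have e1 : ∀ x : ℝ≥0∞, (x ^ (1 / 2 : ℝ)) ^ 2 = x := fun x => by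
    rw [← ENNReal.rpow_natCast, ← ENNReal.rpow_mul]; norm_num
  simp only [mul_pow, e1] at h
  convert h using 4 with k
  rw [← mul_assoc, ← ENNReal.mul_rpow_of_nonneg _ _ (by norm_num),
    ENNReal.mul_inv_cancel (hc k) (hc' k), ENNReal.one_rpow, one_mul]

theorem lintegral_sq_tsum_le {X : Type*} [MeasurableSpace X] (μ : Measure X)
    (c : ℕ → ℝ≥0∞) (hc : ∀ k, c k ≠ 0) (hc' : ∀ k, c k ≠ ∞) (b : ℕ → X → ℝ≥0∞)
    (hb : ∀ k, Measurable (b k)) (W : ℝ≥0∞) (h : ∀ k, ∫⁻ x, b k x ^ 2 ∂μ ≤ c k ^ 2 * W) :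
    ∫⁻ x, (∑' k, b k x) ^ 2 ∂μ ≤ (∑' k, c k) ^ 2 * W := by
  calc ∫⁻ x, (∑' k, b k x) ^ 2 ∂μ
      ≤ ∫⁻ x, (∑' k, c k) * ∑' k, (c k)⁻¹ * b k x ^ 2 ∂μ :=
        lintegral_mono fun x => sq_tsum_le c (fun k => b k x) hc hc'
    _ = (∑' k, c k) * ∑' k, (c k)⁻¹ * ∫⁻ x, b k x ^ 2 ∂μ := by
        rw [lintegral_const_mul _ (Measurable.tsum fun k => ((hb k).pow_const 2).const_mul _),
          lintegral_tsum fun k => (((hb k).pow_const 2).const_mul _).aemeasurable]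
        simp_rw [lintegral_const_mul _ ((hb _).pow_const 2)]
    _ ≤ (∑' k, c k) * ∑' k, c k * W := by
        refine mul_le_mul' le_rfl (ENNReal.tsum_le_tsum fun k => ?_)
        calc (c k)⁻¹ * ∫⁻ x, b k x ^ 2 ∂μ ≤ (c k)⁻¹ * (c k ^ 2 * W) := by gcongr; exact h k
          _ = c k * W := by
            rw [sq, mul_assoc, ← mul_assoc, ENNReal.inv_mul_cancel (hc k) (hc' k), one_mul]
    _ = _ := by rw [ENNReal.tsum_mul_right, sq, mul_assoc]

theorem ENNReal_add_sq_le (x y : ℝ≥0∞) : (x + y) ^ 2 ≤ 2 * (x ^ 2 + y ^ 2) := by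
  have := ENNReal.rpow_add_le_mul_rpow_add_rpow x y (p := 2) (by norm_num)
  norm_num at this
  exact this

theorem iUnion_Ioc_two_pow : ⋃ k : ℕ, Set.Ioc ((2 : ℝ) ^ k) (2 * 2 ^ k) = Set.Ioi 1 := by
  ext x
  simp only [Set.mem_iUnion, Set.mem_Ioc, Set.mem_Ioi]
  constructor
  · rintro ⟨k, h1, -⟩
    exact lt_of_le_of_lt (one_le_pow₀ one_le_two) h1
  · intro hx
    obtain ⟨n, hn⟩ := exists_mem_Ioc_zpow (lt_trans zero_lt_one hx) (one_lt_two (α := ℝ))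
    have h0 : 0 ≤ n := by
      by_contra! h
      have : (2 : ℝ) ^ (n + 1) ≤ 1 := zpow_le_one_of_nonpos₀ one_le_two (by lia)
      linarith [hn.2]
    obtain ⟨m, rfl⟩ := Int.eq_ofNat_of_zero_le h0
    refine ⟨m, by simpa using hn.1, ?_⟩
    have := hn.2
    rw [zpow_add₀ two_ne_zero, zpow_natCast, zpow_one, mul_comm] at this
    exact this

theorem pairwise_disjoint_Ioc_two_pow :
    Pairwise (Function.onFun Disjoint fun k : ℕ => Set.Ioc ((2 : ℝ) ^ k) (2 * 2 ^ k)) := by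
  have : Monotone fun k : ℕ => (2 : ℝ) ^ k := fun i j h => pow_le_pow_right₀ one_le_two h
  have h := this.pairwise_disjoint_on_Ioc_succ
  simpa only [Nat.succ_eq_succ, Order.succ_eq_add_one, pow_succ'] using h

theorem exists_lintegral_main_le {a : ℝ} (ha : 0 < a) (ha1 : a < 1) {s : ℝ} (hs : a / 4 < s) :
    ∃ C > 0, ∀ κ : ℝ, |κ| = 1 → ∀ τ : ℝ → ℝ, Measurable τ → (∀ r, |τ r| ≤ 1) →
      ∀ g : ℝ → ℂ, Continuous g → IntegrableOn g (Set.Ioi 0) →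
      ∫⁻ r in Set.Ioo (0 : ℝ) 1, ‖∫ ρ in Set.Ioi 0, osc a κ τ r ρ * g ρ‖ₑ ^ 2 ≤
        ENNReal.ofReal C *
          ∫⁻ ρ in Set.Ioi (0 : ℝ), ENNReal.ofReal ((1 + ρ ^ 2) ^ s) * ‖g ρ‖ₑ ^ 2 := by
  have hs0 : 0 < s := by linarith
  obtain ⟨ε, hε, hε2, hεs⟩ : ∃ ε > 0, ε ≤ 1 / 2 ∧ a / 4 + ε ≤ s :=
    ⟨min (1 / 2) (s - a / 4), lt_min (by norm_num) (by linarith), min_le_left _ _,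
      by linarith [min_le_right (1 / 2) (s - a / 4)]⟩
  obtain ⟨C, hC, hdy⟩ := exists_lintegral_dyadic_le ha ha1 hε hε2
  have hq1 : (2 : ℝ) ^ (-(ε / 2)) < 1 := Real.rpow_lt_one_of_one_lt_of_neg one_lt_two (by linarith)
  have hq0 : 0 < (2 : ℝ) ^ (-(ε / 2)) := by positivity
  set q : ℝ := (2 : ℝ) ^ (-(ε / 2)) with hq
  refine ⟨2 * (1 + ((1 - q)⁻¹) ^ 2 * C), by positivity, fun κ hκ τ hτ hτ1 g hg hgi => ?_⟩
  set W := ∫⁻ ρ in Set.Ioi (0 : ℝ), ENNReal.ofReal ((1 + ρ ^ 2) ^ s) * ‖g ρ‖ₑ ^ 2 with hW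
  have hmeas : ∀ E : Set ℝ, Measurable fun r => ∫ ρ in E, osc a κ τ r ρ * g ρ := fun E =>
    (StronglyMeasurable.integral_prod_right (f := fun r ρ => osc a κ τ r ρ * g ρ) (ν := volume.restrict E)
      ((measurable_osc a κ hτ).mul (hg.measurable.comp measurable_snd)).stronglyMeasurable).measurable
  have hint : ∀ r, IntegrableOn (fun ρ => osc a κ τ r ρ * g ρ) (Set.Ioi 0) := by
    intro r
    refine Integrable.bdd_mul (c := 1) hgi ?_ ?_
    · exact ((measurable_osc a κ hτ).comp measurable_prodMk_left).aestronglyMeasurable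
    · exact Filter.Eventually.of_forall fun ρ => (norm_osc a κ τ r ρ).le
  have hlow : ∫⁻ r in Set.Ioo (0 : ℝ) 1, ‖∫ ρ in Set.Ioc 0 1, osc a κ τ r ρ * g ρ‖ₑ ^ 2 ≤ W := by
    calc ∫⁻ r in Set.Ioo (0 : ℝ) 1, ‖∫ ρ in Set.Ioc 0 1, osc a κ τ r ρ * g ρ‖ₑ ^ 2 
        ≤ ∫⁻ r in Set.Ioo (0 : ℝ) 1, W := by
          refine lintegral_mono fun r => ?_
          have h1 : ‖∫ ρ in Set.Ioc 0 1, osc a κ τ r ρ * g ρ‖ₑ ≤ ∫⁻ ρ in Set.Ioc (0 : ℝ) 1, 1 * ‖g ρ‖ₑ := by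
            refine (enorm_integral_le_lintegral_enorm _).trans_eq ?_
            congr 1; ext ρ
            rw [enorm_mul, ← ofReal_norm, norm_osc, ENNReal.ofReal_one]
          calc ‖∫ ρ in Set.Ioc 0 1, osc a κ τ r ρ * g ρ‖ₑ ^ 2 
              ≤ (∫⁻ ρ in Set.Ioc (0 : ℝ) 1, 1 * ‖g ρ‖ₑ) ^ 2 := by gcongr
            _ ≤ (∫⁻ ρ in Set.Ioc (0 : ℝ) 1, 1 ^ 2) * ∫⁻ ρ in Set.Ioc (0 : ℝ) 1, ‖g ρ‖ₑ ^ 2 :=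
              sq_lintegral_mul_le _ aemeasurable_const hg.measurable.enorm.aemeasurable
            _ = ∫⁻ ρ in Set.Ioc (0 : ℝ) 1, ‖g ρ‖ₑ ^ 2 := by simp
            _ ≤ ∫⁻ ρ in Set.Ioi (0 : ℝ), ‖g ρ‖ₑ ^ 2 :=
              lintegral_mono_set fun x hx => hx.1
            _ ≤ W := by
              refine lintegral_mono fun ρ => ?_
              conv_lhs => rw [← one_mul (‖g ρ‖ₑ ^ 2)]
              gcongr
              rw [ENNReal.one_le_ofReal]
              exact Real.one_le_rpow (by nlinarith [sq_nonneg ρ]) hs0.le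
      _ = W := by simp
  have hhigh : ∫⁻ r in Set.Ioo (0 : ℝ) 1, ‖∫ ρ in Set.Ioi 1, osc a κ τ r ρ * g ρ‖ₑ ^ 2 ≤
      ENNReal.ofReal (((1 - q)⁻¹) ^ 2 * C) * W := by
    have hsum : ∑' k : ℕ, ENNReal.ofReal q ^ k = ENNReal.ofReal ((1 - q)⁻¹) := by
      rw [ENNReal.tsum_geometric, ENNReal.ofReal_inv_of_pos (by linarith),
        ENNReal.ofReal_sub _ hq0.le, ENNReal.ofReal_one]
    rw [ENNReal.ofReal_mul (by positivity), ENNReal.ofReal_pow (inv_nonneg.2 (by linarith)), ← hsum, mul_assoc]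
    refine le_trans ?_ (lintegral_sq_tsum_le (volume.restrict (Set.Ioo (0 : ℝ) 1)) (fun k => ENNReal.ofReal q ^ k) (fun k => by positivity)
      (fun k => by finiteness) (fun k r => ‖∫ ρ in Set.Ioc ((2 : ℝ) ^ k) (2 * 2 ^ k), osc a κ τ r ρ * g ρ‖ₑ)
      (fun k => (hmeas _).enorm) (ENNReal.ofReal C * W) ?_)
    · refine lintegral_mono fun r => ?_
      simp only
      gcongr
      rw [← iUnion_Ioc_two_pow, integral_iUnion (fun _ => measurableSet_Ioc) pairwise_disjoint_Ioc_two_pow]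
      · exact enorm_tsum_le_tsum_enorm
      · rw [iUnion_Ioc_two_pow]
        exact (hint r).mono_set (Set.Ioi_subset_Ioi zero_le_one)
    · intro k
      have hN : (1 : ℝ) ≤ 2 ^ k := one_le_pow₀ one_le_two
      have hN0 : (0 : ℝ) < 2 ^ k := by positivity
      refine (hdy κ hκ τ hτ hτ1 g hg (2 ^ k) hN).trans ?_
      have hNs : ((2 : ℝ) ^ k) ^ (a / 2 + ε) ≤ (q ^ k) ^ 2 * ((2 : ℝ) ^ k) ^ (2 * s) := by
        have : (q ^ k) ^ 2 = ((2 : ℝ) ^ k) ^ (-ε) := by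
          rw [hq, ← Real.rpow_natCast, ← Real.rpow_natCast, ← Real.rpow_natCast, ← Real.rpow_mul zero_le_two,
            ← Real.rpow_mul zero_le_two, ← Real.rpow_mul zero_le_two]
          congr 1
          push_cast
          ring
        rw [this, ← Real.rpow_add hN0]
        exact Real.rpow_le_rpow_of_exponent_le hN (by linarith)
      calc ENNReal.ofReal (C * ((2 : ℝ) ^ k) ^ (a / 2 + ε)) * ∫⁻ ρ in Set.Ioc ((2 : ℝ) ^ k) (2 * 2 ^ k), ‖g ρ‖ₑ ^ 2
          ≤ ENNReal.ofReal (C * ((q ^ k) ^ 2 * ((2 : ℝ) ^ k) ^ (2 * s))) *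
            ∫⁻ ρ in Set.Ioc ((2 : ℝ) ^ k) (2 * 2 ^ k), ‖g ρ‖ₑ ^ 2 := by gcongr
        _ = (ENNReal.ofReal q ^ k) ^ 2 * ENNReal.ofReal C *
            ∫⁻ ρ in Set.Ioc ((2 : ℝ) ^ k) (2 * 2 ^ k), ENNReal.ofReal (((2 : ℝ) ^ k) ^ (2 * s)) * ‖g ρ‖ₑ ^ 2 := by
          rw [lintegral_const_mul _ (hg.measurable.enorm.pow_const 2), ENNReal.ofReal_mul hC.le,
            ENNReal.ofReal_mul (by positivity), ENNReal.ofReal_pow (by positivity), ENNReal.ofReal_pow hq0.le]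
          ring
        _ ≤ (ENNReal.ofReal q ^ k) ^ 2 * ENNReal.ofReal C *
            ∫⁻ ρ in Set.Ioc ((2 : ℝ) ^ k) (2 * 2 ^ k), ENNReal.ofReal ((1 + ρ ^ 2) ^ s) * ‖g ρ‖ₑ ^ 2 := by
          refine mul_le_mul' le_rfl ?_
          refine setLIntegral_mono' measurableSet_Ioc fun ρ hρ => ?_
          gcongr
          rw [Real.rpow_mul hN0.le, Real.rpow_two]
          refine Real.rpow_le_rpow (by positivity) ?_ hs0.le
          nlinarith [hρ.1]
        _ ≤ (ENNReal.ofReal q ^ k) ^ 2 * ENNReal.ofReal C * W := by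
          gcongr
          exact lintegral_mono_set fun x (hx : x ∈ Set.Ioc _ _) => lt_trans hN0 hx.1
        _ = _ := by rw [mul_assoc]
  calc ∫⁻ r in Set.Ioo (0 : ℝ) 1, ‖∫ ρ in Set.Ioi 0, osc a κ τ r ρ * g ρ‖ₑ ^ 2
      ≤ ∫⁻ r in Set.Ioo (0 : ℝ) 1, 2 * (‖∫ ρ in Set.Ioc 0 1, osc a κ τ r ρ * g ρ‖ₑ ^ 2 +
          ‖∫ ρ in Set.Ioi 1, osc a κ τ r ρ * g ρ‖ₑ ^ 2) := by
        refine lintegral_mono fun r => ?_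
        refine le_trans ?_ (ENNReal_add_sq_le _ _)
        gcongr
        rw [← Set.Ioc_union_Ioi_eq_Ioi zero_le_one, setIntegral_union Set.Ioc_disjoint_Ioi_same measurableSet_Ioi
          ((hint r).mono_set Set.Ioc_subset_Ioi_self) ((hint r).mono_set (Set.Ioi_subset_Ioi zero_le_one))]
        exact enorm_add_le _ _
    _ = 2 * ((∫⁻ r in Set.Ioo (0 : ℝ) 1, ‖∫ ρ in Set.Ioc 0 1, osc a κ τ r ρ * g ρ‖ₑ ^ 2) +
          ∫⁻ r in Set.Ioo (0 : ℝ) 1, ‖∫ ρ in Set.Ioi 1, osc a κ τ r ρ * g ρ‖ₑ ^ 2) := by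
        rw [lintegral_const_mul _ (by have := hmeas; fun_prop), lintegral_add_left (by have := hmeas; fun_prop)]
    _ ≤ 2 * (W + ENNReal.ofReal (((1 - q)⁻¹) ^ 2 * C) * W) := by gcongr
    _ = _ := by
        rw [ENNReal.ofReal_mul zero_le_two, ENNReal.ofReal_add zero_le_one (by positivity)]
        simp only [ENNReal.ofReal_ofNat, ENNReal.ofReal_one]
        ring

theorem sq_min_one_inv_le {y σ : ℝ} (hy : 0 < y) (hσ : 0 ≤ σ) (hσ1 : σ ≤ 1) :
    min 1 y⁻¹ ^ 2 ≤ y ^ (σ - 1) := by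
  rcases le_total y 1 with h | h
  · calc min 1 y⁻¹ ^ 2 ≤ 1 := pow_le_one₀ (by positivity) (min_le_left _ _)
      _ ≤ y ^ (σ - 1) := Real.one_le_rpow_of_pos_of_le_one_of_nonpos hy h (by linarith)
  · calc min 1 y⁻¹ ^ 2 ≤ (y⁻¹) ^ 2 := by
          gcongr
          exact min_le_right _ _
      _ = y ^ (-2 : ℝ) := by
        rw [Real.rpow_neg hy.le, Real.rpow_two, inv_pow]
      _ ≤ y ^ (σ - 1) := Real.rpow_le_rpow_of_exponent_le h (by linarith)

theorem exists_lintegral_error_le {s : ℝ} (hs : 0 < s) :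
    ∃ C > 0, ∀ g : ℝ → ℂ, Continuous g →
      ∫⁻ r in Set.Ioo (0 : ℝ) 1,
        (∫⁻ ρ in Set.Ioi (0 : ℝ), ENNReal.ofReal (min 1 (r * ρ)⁻¹) * ‖g ρ‖ₑ) ^ 2 ≤
        ENNReal.ofReal C *
          ∫⁻ ρ in Set.Ioi (0 : ℝ), ENNReal.ofReal ((1 + ρ ^ 2) ^ s) * ‖g ρ‖ₑ ^ 2 := by
  obtain ⟨σ, hσ, hσ1, hσs⟩ : ∃ σ > 0, σ ≤ 1 / 2 ∧ σ ≤ s :=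
    ⟨min (1 / 2) s, lt_min (by norm_num) hs, min_le_left _ _, min_le_right _ _⟩
  set J1 := ∫⁻ r in Set.Ioo (0 : ℝ) 1, ENNReal.ofReal (r ^ (σ - 1)) with hJ1
  set J2 := ∫⁻ ρ in Set.Ioi (1 : ℝ), ENNReal.ofReal (ρ ^ (-1 - σ)) with hJ2
  have J1f : J1 ≠ ∞ := by
    have : IntegrableOn (fun r : ℝ => r ^ (σ - 1)) (Set.Ioo 0 1) :=
      (intervalIntegral.integrableOn_Ioo_rpow_iff zero_lt_one).2 (by linarith)
    exact this.lintegral_lt_top.ne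
  have J2f : J2 ≠ ∞ := by
    have : IntegrableOn (fun r : ℝ => r ^ (-1 - σ)) (Set.Ioi 1) :=
      integrableOn_Ioi_rpow_of_lt (by linarith) one_pos
    exact this.lintegral_lt_top.ne
  refine ⟨(1 + J1 * J2).toReal + 1, by positivity, fun g hg => ?_⟩
  set W := ∫⁻ ρ in Set.Ioi (0 : ℝ), ENNReal.ofReal ((1 + ρ ^ 2) ^ s) * ‖g ρ‖ₑ ^ 2 with hW
  have hg' := hg.measurable
  have hr : ∀ r ∈ Set.Ioo (0 : ℝ) 1,
      (∫⁻ ρ in Set.Ioi (0 : ℝ), ENNReal.ofReal (min 1 (r * ρ)⁻¹) * ‖g ρ‖ₑ) ^ 2 ≤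
        (1 + ENNReal.ofReal (r ^ (σ - 1)) * J2) * W := by
    intro r hr
    have e1 : ∀ ρ : ℝ, ENNReal.ofReal (min 1 (r * ρ)⁻¹) * ‖g ρ‖ₑ =
        ENNReal.ofReal (min 1 (r * ρ)⁻¹ * (1 + ρ ^ 2) ^ (-s / 2)) *
          (ENNReal.ofReal ((1 + ρ ^ 2) ^ (s / 2)) * ‖g ρ‖ₑ) := by
      intro ρ
      rw [← mul_assoc, ← ENNReal.ofReal_mul' (by positivity), mul_assoc, ← Real.rpow_add (by positivity)]
      rw [show -s / 2 + s / 2 = 0 by ring, Real.rpow_zero, mul_one]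
    simp only [e1]
    refine (sq_lintegral_mul_le _ (by fun_prop) (by fun_prop)).trans ?_
    refine mul_le_mul' ?_ (lintegral_mono fun ρ => ?_)
    · have hb : ∀ ρ ∈ Set.Ioi (0 : ℝ), ENNReal.ofReal (min 1 (r * ρ)⁻¹ * (1 + ρ ^ 2) ^ (-s / 2)) ^ 2 ≤
          (Set.Ioc (0 : ℝ) 1).indicator 1 ρ + ENNReal.ofReal (r ^ (σ - 1)) *
            (Set.Ioi (1 : ℝ)).indicator (fun ρ => ENNReal.ofReal (ρ ^ (-1 - σ))) ρ := by
        intro ρ hρ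
        have hρ : 0 < ρ := hρ
        have hm : 0 ≤ min 1 (r * ρ)⁻¹ := le_min zero_le_one (inv_nonneg.2 (mul_nonneg hr.1.le hρ.le))
        rw [← ENNReal.ofReal_pow (by positivity), mul_pow]
        have e2 : ((1 + ρ ^ 2) ^ (-s / 2)) ^ 2 = (1 + ρ ^ 2) ^ (-s) := by
          rw [← Real.rpow_natCast, ← Real.rpow_mul (by positivity)]
          congr 1
          push_cast
          ring
        rw [e2]
        rcases le_or_gt ρ 1 with h | h
        · rw [Set.indicator_of_mem (show ρ ∈ Set.Ioc (0 : ℝ) 1 from ⟨hρ, h⟩), Pi.one_apply]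
          refine le_add_right ?_
          rw [ENNReal.ofReal_le_one]
          refine mul_le_one₀ (pow_le_one₀ hm (min_le_left _ _)) (by positivity) ?_
          exact Real.rpow_le_one_of_one_le_of_nonpos (by nlinarith) (by linarith)
        · rw [Set.indicator_of_mem (show ρ ∈ Set.Ioi (1 : ℝ) from h)]
          refine le_add_left ?_
          rw [← ENNReal.ofReal_mul (by have := hr.1; positivity)]
          refine ENNReal.ofReal_le_ofReal ?_
          calc min 1 (r * ρ)⁻¹ ^ 2 * (1 + ρ ^ 2) ^ (-s) ≤ (r * ρ) ^ (σ - 1) * ρ ^ (-2 * σ) := by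
                refine mul_le_mul (sq_min_one_inv_le (mul_pos hr.1 hρ) hσ.le (by linarith)) ?_ (by positivity)
                  (Real.rpow_nonneg (mul_pos hr.1 hρ).le _)
                calc (1 + ρ ^ 2) ^ (-s) ≤ (1 + ρ ^ 2) ^ (-σ) :=
                      Real.rpow_le_rpow_of_exponent_le (by nlinarith) (by linarith)
                  _ ≤ (ρ ^ 2) ^ (-σ) :=
                      Real.rpow_le_rpow_of_nonpos (by positivity) (by linarith) (by linarith)
                  _ = ρ ^ (-2 * σ) := by
                      rw [← Real.rpow_natCast, ← Real.rpow_mul hρ.le]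
                      congr 1
                      push_cast
                      ring
            _ = r ^ (σ - 1) * ρ ^ (-1 - σ) := by
                rw [Real.mul_rpow hr.1.le hρ.le, mul_assoc, ← Real.rpow_add hρ]
                ring_nf
      refine (setLIntegral_mono' measurableSet_Ioi hb).trans ?_
      rw [lintegral_add_left (measurable_one.indicator measurableSet_Ioc)]
      refine add_le_add ?_ ?_
      · refine (setLIntegral_le_lintegral _ _).trans ?_
        rw [lintegral_indicator measurableSet_Ioc]
        simp
      · refine (setLIntegral_le_lintegral _ _).trans ?_
        rw [lintegral_const_mul _ ((by fun_prop : Measurable fun ρ : ℝ => ENNReal.ofReal (ρ ^ (-1 - σ))).indicator measurableSet_Ioi),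
          lintegral_indicator measurableSet_Ioi]
    · rw [mul_pow, ← ENNReal.ofReal_pow (by positivity), ← Real.rpow_natCast, ← Real.rpow_mul (by positivity)]
      norm_num
  refine (setLIntegral_mono' measurableSet_Ioo hr).trans ?_
  rw [lintegral_mul_const _ (by fun_prop), lintegral_add_left measurable_const, lintegral_mul_const _ (by fun_prop)]
  refine mul_le_mul' ?_ le_rfl
  have hfin : 1 + J1 * J2 ≠ ∞ := by finiteness
  rw [ENNReal.le_ofReal_iff_toReal_le (by simpa using hfin) (by positivity)]
  simp only [lintegral_const, Measure.restrict_apply_univ, Real.volume_Ioo, sub_zero, ENNReal.ofReal_one, mul_one]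
  linarith

theorem exists_norm_sub_exp_le {κ : ℝ} {w w' : ℝ → ℝ} (h1 : ∀ z > 0, HasDerivAt w (w' z) z)
    (h2 : ∀ z > 0, HasDerivAt w' (κ * w z / z ^ 2 - w z) z) :
    ∃ A B : ℂ, ∃ D > 0, ∀ z : ℝ, z ≥ 1 → ‖(w z : ℂ) - A * Complex.exp (Complex.I * z) -
      B * Complex.exp (-(Complex.I * z))‖ ≤ D / z := by
  have hF : ∀ z > 0, HasDerivAt (fun z => (w z ^ 2 + w' z ^ 2) * Real.exp (|κ| / z))
      (((2 * κ * w z * w' z) / z ^ 2 - |κ| * (w z ^ 2 + w' z ^ 2) / z ^ 2) * Real.exp (|κ| / z)) z := by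
    intro z hz
    have e1 := ((h1 z hz).pow 2).add ((h2 z hz).pow 2)
    have e2 := (((hasDerivAt_inv hz.ne').const_mul |κ|)).exp
    have e3 := e1.mul e2
    refine (e3.congr_deriv ?_)
    simp only [Pi.add_apply, Pi.pow_apply, div_eq_mul_inv]
    push_cast
    field_simp
    ring
  obtain ⟨M, hM, hMw⟩ : ∃ M > 0, ∀ z ≥ 1, |w z| ≤ M := by
    refine ⟨√((w 1 ^ 2 + w' 1 ^ 2) * Real.exp |κ|) + 1, by positivity, fun z hz => ?_⟩
    have anti : AntitoneOn (fun z => (w z ^ 2 + w' z ^ 2) * Real.exp (|κ| / z)) (Set.Ici 1) := by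
      refine antitoneOn_of_deriv_nonpos (convex_Ici 1) ?_ ?_ ?_
      · exact fun z hz => (hF z (lt_of_lt_of_le one_pos hz)).continuousAt.continuousWithinAt
      · rw [interior_Ici]
        exact fun z hz => (hF z (lt_trans one_pos hz)).differentiableAt.differentiableWithinAt
      · rw [interior_Ici]
        intro z hz
        rw [(hF z (lt_trans one_pos hz)).deriv]
        refine mul_nonpos_of_nonpos_of_nonneg ?_ (Real.exp_pos _).le
        rw [← sub_div]
        refine div_nonpos_of_nonpos_of_nonneg ?_ (by positivity)
        have : 2 * κ * w z * w' z ≤ |κ| * (2 * |w z| * |w' z|) := by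
          calc 2 * κ * w z * w' z ≤ |2 * κ * w z * w' z| := le_abs_self _
            _ = _ := by simp only [abs_mul, abs_two]; ring
        have h3 : 2 * |w z| * |w' z| ≤ w z ^ 2 + w' z ^ 2 := by
          have := sq_nonneg (|w z| - |w' z|)
          nlinarith [sq_abs (w z), sq_abs (w' z)]
        nlinarith [abs_nonneg κ]
    have h3 := anti (Set.mem_Ici.2 le_rfl) (Set.mem_Ici.2 hz) hz
    simp only [div_one] at h3
    have h4 : w z ^ 2 ≤ (w 1 ^ 2 + w' 1 ^ 2) * Real.exp |κ| := by
      refine le_trans ?_ h3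
      have : 1 ≤ Real.exp (|κ| / z) := Real.one_le_exp (by positivity)
      nlinarith [sq_nonneg (w z), sq_nonneg (w' z)]
    have := Real.abs_le_sqrt h4
    linarith
  set α : ℝ → ℂ := fun z => Complex.exp (-(Complex.I * z)) * ((w' z : ℂ) + Complex.I * w z) with hα
  have hα' : ∀ z : ℝ, z > 0 → HasDerivAt α (Complex.exp (-(Complex.I * z)) * ((κ * w z / z ^ 2 : ℝ) : ℂ)) z := by
    intro z hz
    have e1 : HasDerivAt (fun z : ℝ => Complex.exp (-(Complex.I * z))) _ z :=
      ((Complex.ofRealCLM.hasDerivAt (x := z)).const_mul Complex.I).neg.cexp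
    have e2 := (h2 z hz).ofReal_comp.add ((h1 z hz).ofReal_comp.const_mul Complex.I)
    refine (e1.mul e2).congr_deriv ?_
    simp only [Pi.add_apply, Complex.ofRealCLM_apply]
    push_cast
    linear_combination (-Complex.exp (-(Complex.I * z)) * w z) * Complex.I_sq
  set K := |κ| * M with hK
  have hK0 : 0 ≤ K := by positivity
  have hdiff : ∀ x : ℝ, x ≥ 1 → ∀ y ≥ x, ‖α y - α x‖ ≤ K / x := by
    intro x hx y hy
    have hpos : ∀ z ∈ Set.Icc x y, 0 < z := fun z hz => by linarith [hz.1]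
    have hB : ∀ z > 0, HasDerivAt (fun z => K * (x⁻¹ - z⁻¹)) (K * (z ^ 2)⁻¹) z := by
      intro z hz
      refine (((hasDerivAt_inv hz.ne').const_sub x⁻¹).const_mul K).congr_deriv (by simp)
    have := image_norm_le_of_norm_deriv_right_le_deriv_boundary' (f := fun z => α z - α x)
      (f' := fun z => Complex.exp (-(Complex.I * z)) * ((κ * w z / z ^ 2 : ℝ) : ℂ))
      (a := x) (b := y) (B := fun z => K * (x⁻¹ - z⁻¹)) (B' := fun z => K * (z ^ 2)⁻¹)
      (fun z hz => ((hα' z (hpos z hz)).sub_const _).continuousAt.continuousWithinAt)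
      (fun z hz => ((hα' z (hpos z (Set.Ico_subset_Icc_self hz))).sub_const _).hasDerivWithinAt)
      (by simp)
      (fun z hz => (hB z (hpos z hz)).continuousAt.continuousWithinAt)
      (fun z hz => (hB z (hpos z (Set.Ico_subset_Icc_self hz))).hasDerivWithinAt)
      (fun z hz => by
        have hz1 : 1 ≤ z := hx.le.trans hz.1
        have e : ‖Complex.exp (-(Complex.I * z))‖ = 1 := by
          rw [show -(Complex.I * (z : ℂ)) = ((-z : ℝ) : ℂ) * Complex.I by push_cast; ring,
            Complex.norm_exp_ofReal_mul_I]
        rw [norm_mul, e, one_mul, Complex.norm_real, Real.norm_eq_abs, abs_div, abs_mul,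
          abs_of_pos (by positivity : 0 < z ^ 2), div_eq_mul_inv]
        exact mul_le_mul_of_nonneg_right (mul_le_mul_of_nonneg_left (hMw z hz1) (abs_nonneg κ))
          (by positivity))
      (Set.right_mem_Icc.2 hy)
    refine this.trans ?_
    rw [div_eq_mul_inv]
    have : 0 ≤ y⁻¹ := inv_nonneg.2 (by linarith)
    gcongr
    linarith
  have hcau : CauchySeq fun n : ℕ => α (n + 1) := by
    refine cauchySeq_of_le_tendsto_0' (fun n : ℕ => K / (n + 1)) (fun n m hnm => ?_) ?_
    · rw [dist_comm, dist_eq_norm]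
      refine hdiff _ (by simp) _ ?_
      have : (n : ℝ) ≤ m := by exact_mod_cast hnm
      simpa using this
    · have := (tendsto_one_div_add_atTop_nhds_zero_nat (𝕜 := ℝ)).const_mul K
      simpa [div_eq_mul_inv] using this
  obtain ⟨β, hβ⟩ := cauchySeq_tendsto_of_complete hcau
  have hβd : ∀ z : ℝ, z ≥ 1 → ‖α z - β‖ ≤ K / z := by
    intro z hz
    have : Filter.Tendsto (fun n : ℕ => ‖α (n + 1) - α z‖) Filter.atTop (nhds ‖β - α z‖) :=
      (hβ.sub_const _).norm
    rw [norm_sub_rev]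
    refine le_of_tendsto this ?_
    filter_upwards [Filter.eventually_ge_atTop ⌈z⌉₊] with n hn
    refine hdiff z hz _ ?_
    have := Nat.le_ceil z
    have h' : (⌈z⌉₊ : ℝ) ≤ n := by exact_mod_cast hn
    show z ≤ (n : ℝ) + 1
    linarith
  refine ⟨β / (2 * Complex.I), -(conj β / (2 * Complex.I)), K + 1, by positivity, fun z hz => ?_⟩
  have ee : Complex.exp (Complex.I * z) * Complex.exp (-(Complex.I * z)) = 1 := by
    rw [← Complex.exp_add]; simp
  have hc : conj (α z) = Complex.exp (Complex.I * z) * ((w' z : ℂ) - Complex.I * w z) := by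
    simp only [hα, map_mul, map_add, Complex.conj_ofReal, Complex.conj_I, ← Complex.exp_conj, map_neg]
    ring_nf
  have key : (w z : ℂ) - β / (2 * Complex.I) * Complex.exp (Complex.I * z) -
      -(conj β / (2 * Complex.I)) * Complex.exp (-(Complex.I * z)) =
      ((α z - β) * Complex.exp (Complex.I * z) - conj (α z - β) * Complex.exp (-(Complex.I * z))) /
        (2 * Complex.I) := by
    rw [map_sub, hc]
    simp only [hα]
    field_simp
    linear_combination (- 2 * Complex.I * (w z)) * ee
  rw [key, norm_div]
  have n1 : ‖Complex.exp (Complex.I * z)‖ = 1 := by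
    rw [mul_comm, Complex.norm_exp_ofReal_mul_I]
  have n2 : ‖Complex.exp (-(Complex.I * z))‖ = 1 := by
    rw [show -(Complex.I * (z : ℂ)) = ((-z : ℝ) : ℂ) * Complex.I by push_cast; ring,
      Complex.norm_exp_ofReal_mul_I]
  have n3 : ‖(2 * Complex.I : ℂ)‖ = 2 := by simp
  have n4 : ‖(α z - β) * Complex.exp (Complex.I * z) - conj (α z - β) * Complex.exp (-(Complex.I * z))‖
      ≤ ‖α z - β‖ + ‖α z - β‖ := by
    refine (norm_sub_le _ _).trans ?_
    rw [norm_mul, norm_mul, n1, n2, RCLike.norm_conj, mul_one]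
  rw [n3]
  have h5 := hβd z hz
  have h6 : K / z ≤ (K + 1) / z := by gcongr; linarith
  linarith

/-- The surface measure of the unit sphere, as a measure on the ambient space. -/
def sphereMeasure (n : ℕ) : Measure (EuclideanSpace ℝ (Fin n)) :=
  ((volume : Measure (EuclideanSpace ℝ (Fin n))).toSphere).map Subtype.val

instance (n : ℕ) : IsFiniteMeasure (sphereMeasure n) := by
  unfold sphereMeasure; infer_instance

theorem ae_sphereMeasure (n : ℕ) : ∀ᵐ ω ∂sphereMeasure n, ‖ω‖ = 1 := by
  unfold sphereMeasure
  rw [ae_map_iff measurable_subtype_coe.aemeasurable (measurableSet_eq_fun measurable_norm measurable_const)]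
  exact Filter.Eventually.of_forall fun ω => by simp

theorem sphereMeasure_apply (n : ℕ) {s : Set (EuclideanSpace ℝ (Fin n))} (hs : MeasurableSet s) :
    sphereMeasure n s = n * volume {x : EuclideanSpace ℝ (Fin n) | x ≠ 0 ∧ ‖x‖ < 1 ∧ ‖x‖⁻¹ • x ∈ s} := by
  rw [sphereMeasure, Measure.map_apply measurable_subtype_coe hs,
    Measure.toSphere_apply' _ (measurable_subtype_coe hs), finrank_euclideanSpace_fin]
  congr 2
  ext x
  simp only [Set.mem_smul, Set.mem_image, Set.mem_preimage, Set.mem_ofPred_eq, Subtype.exists,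
    mem_sphere_zero_iff_norm, exists_and_right, exists_eq_right]
  constructor
  · rintro ⟨t, ht, y, ⟨hy1, hys⟩, rfl⟩
    have hy0 : y ≠ 0 := by rintro rfl; simp at hy1
    have : ‖t • y‖ = t := by rw [norm_smul, hy1, mul_one, Real.norm_of_nonneg ht.1.le]
    refine ⟨smul_ne_zero ht.1.ne' hy0, this.trans_lt ht.2, ?_⟩
    rwa [this, inv_smul_smul₀ ht.1.ne']
  · rintro ⟨h0, h1, hs⟩
    have : 0 < ‖x‖ := norm_pos_iff.2 h0
    refine ⟨‖x‖, ⟨this, h1⟩, ‖x‖⁻¹ • x, ⟨?_, hs⟩, smul_inv_smul₀ this.ne' x⟩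
    rw [norm_smul, norm_inv, norm_norm, inv_mul_cancel₀ this.ne']

theorem measurePreserving_sphereMeasure (n : ℕ)
    (L : EuclideanSpace ℝ (Fin n) ≃ₗᵢ[ℝ] EuclideanSpace ℝ (Fin n)) :
    MeasurePreserving L (sphereMeasure n) (sphereMeasure n) := by
  refine ⟨L.continuous.measurable, ?_⟩
  ext s hs
  rw [Measure.map_apply L.continuous.measurable hs, sphereMeasure_apply n hs,
    sphereMeasure_apply n (L.continuous.measurable hs)]
  congr 1
  rw [← L.measurePreserving.measure_preimage_equiv (f := L.toHomeomorph.toMeasurableEquiv)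
    {x | x ≠ 0 ∧ ‖x‖ < 1 ∧ ‖x‖⁻¹ • x ∈ s}]
  congr 1
  ext x
  simp

theorem integral_cos_inner_eq (n : ℕ) {x y : EuclideanSpace ℝ (Fin n)} (h : ‖x‖ = ‖y‖) :
    ∫ ω, Real.cos ⟪x, ω⟫_ℝ ∂sphereMeasure n = ∫ ω, Real.cos ⟪y, ω⟫_ℝ ∂sphereMeasure n := by
  set L := (ℝ ∙ (x - y))ᗮ.reflection with hL
  have hLx : L x = y := Submodule.reflection_sub h
  rw [← (measurePreserving_sphereMeasure n L).integral_comp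
    L.toHomeomorph.measurableEmbedding (fun ω => Real.cos ⟪y, ω⟫_ℝ)]
  simp only [← hLx, LinearIsometryEquiv.inner_map_map]

theorem hasDerivAt_integral_of_bounded {X : Type*} [MeasurableSpace X] (m : Measure X)
    [IsFiniteMeasure m] {φ φ' : ℝ → X → ℝ} (hφ : ∀ t, Measurable (φ t)) (hφ' : ∀ t, Measurable (φ' t))
    {K : ℝ} (hK : ∀ t, ∀ᵐ ω ∂m, |φ t ω| ≤ K) (hK' : ∀ᵐ ω ∂m, ∀ t, |φ' t ω| ≤ K)
    (hd : ∀ ω t, HasDerivAt (φ · ω) (φ' t ω) t) (t : ℝ) :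
    HasDerivAt (fun t => ∫ ω, φ t ω ∂m) (∫ ω, φ' t ω ∂m) t := by
  refine (hasDerivAt_integral_of_dominated_loc_of_deriv_le (F := φ) (F' := φ') (bound := fun _ => K)
    (Filter.univ_mem) (Filter.Eventually.of_forall fun t => (hφ t).aestronglyMeasurable)
    ?_ (hφ' t).aestronglyMeasurable (hK'.mono fun ω h t _ => h t) (integrable_const K)
    (Filter.Eventually.of_forall fun ω t _ => hd ω t)).2
  exact (integrable_const K).mono' (hφ t).aestronglyMeasurable (hK t)

theorem abs_apply_le_one {n : ℕ} {ω : EuclideanSpace ℝ (Fin n)} (h : ‖ω‖ = 1) (i : Fin n) : |ω i| ≤ 1 := by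
  simpa [h] using PiLp.norm_apply_le ω i

/-- The average `∫ cos(r ω_i) dσ(ω)` over the unit sphere: a Bessel-type function. -/
def sphereCos {n : ℕ} (i : Fin n) (r : ℝ) : ℝ := ∫ ω, Real.cos (r * ω i) ∂sphereMeasure n

theorem hasDerivAt_sphereCos {n : ℕ} (i : Fin n) (r : ℝ) :
    HasDerivAt (sphereCos i) (∫ ω, -(ω i * Real.sin (r * ω i)) ∂sphereMeasure n) r := by
  refine hasDerivAt_integral_of_bounded (sphereMeasure n) (φ := fun r ω => Real.cos (r * ω i))
    (φ' := fun r ω => -(ω i * Real.sin (r * ω i)))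
    (fun t => by fun_prop) (fun t => by fun_prop) (K := 1)
    (fun t => Filter.Eventually.of_forall fun ω => Real.abs_cos_le_one _) ?_ ?_ r
  · filter_upwards [ae_sphereMeasure n] with ω hω t
    rw [abs_neg, abs_mul]
    exact mul_le_one₀ (abs_apply_le_one hω i) (abs_nonneg _) (Real.abs_sin_le_one _)
  · intro ω t
    exact ((hasDerivAt_id t).mul_const (ω i)).cos.congr_deriv (by simp; ring)

theorem hasDerivAt_deriv_sphereCos {n : ℕ} (i : Fin n) (r : ℝ) :
    HasDerivAt (fun r => ∫ ω, -(ω i * Real.sin (r * ω i)) ∂sphereMeasure n)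
      (∫ ω, -(ω i ^ 2 * Real.cos (r * ω i)) ∂sphereMeasure n) r := by
  refine hasDerivAt_integral_of_bounded (sphereMeasure n) (φ := fun r ω => -(ω i * Real.sin (r * ω i)))
    (φ' := fun r ω => -(ω i ^ 2 * Real.cos (r * ω i)))
    (fun t => by fun_prop) (fun t => by fun_prop) (K := 1) (fun t => ?_) ?_ ?_ r
  · filter_upwards [ae_sphereMeasure n] with ω hω
    rw [abs_neg, abs_mul]
    exact mul_le_one₀ (abs_apply_le_one hω i) (abs_nonneg _) (Real.abs_sin_le_one _)
  · filter_upwards [ae_sphereMeasure n] with ω hω t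
    rw [abs_neg, abs_mul, abs_pow]
    exact mul_le_one₀ (pow_le_one₀ (abs_nonneg _) (abs_apply_le_one hω i)) (abs_nonneg _) (Real.abs_cos_le_one _)
  · intro ω t
    exact (((hasDerivAt_id t).mul_const (ω i)).sin.const_mul (ω i)).neg.congr_deriv (by simp; ring)

theorem integral_sq_mul_cos_eq {n : ℕ} {i j : Fin n} (hij : i ≠ j) {r : ℝ} (hr : r ≠ 0) :
    ∫ ω, ω j ^ 2 * Real.cos (r * ω i) ∂sphereMeasure n =
      r⁻¹ * ∫ ω, ω i * Real.sin (r * ω i) ∂sphereMeasure n := by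
  have hc : ∀ θ : ℝ, ∫ ω, Real.cos (r * (Real.cos θ * ω i + Real.sin θ * ω j)) ∂sphereMeasure n =
      ∫ ω, Real.cos (r * ω i) ∂sphereMeasure n := by
    intro θ
    have := integral_cos_inner_eq n
      (x := r • (Real.cos θ • EuclideanSpace.single i 1 + Real.sin θ • EuclideanSpace.single j 1))
      (y := r • EuclideanSpace.single i 1) ?_
    · simpa [inner_smul_left, inner_add_left, mul_add, EuclideanSpace.inner_single_left] using this
    · rw [norm_smul, norm_smul]
      congr 1
      rw [PiLp.norm_single, norm_one, EuclideanSpace.norm_eq, Real.sqrt_eq_one,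
        Finset.sum_eq_add i j hij]
      · simp [hij, hij.symm]
      · intro k _ hk
        simp [hk.1, hk.2]
      · simp
      · simp
  have hb : ∀ θ (ω : EuclideanSpace ℝ (Fin n)), ‖ω‖ = 1 → |Real.cos θ * ω i + Real.sin θ * ω j| ≤ 2 ∧
      |-Real.sin θ * ω i + Real.cos θ * ω j| ≤ 2 := by
    intro θ ω hω
    have h1 := abs_apply_le_one hω i
    have h2 := abs_apply_le_one hω j
    have h3 := Real.abs_cos_le_one θ
    have h4 := Real.abs_sin_le_one θ
    constructor
    · refine (abs_add_le _ _).trans ?_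
      rw [abs_mul, abs_mul]
      nlinarith [mul_le_one₀ h3 (abs_nonneg _) h1, mul_le_one₀ h4 (abs_nonneg _) h2]
    · refine (abs_add_le _ _).trans ?_
      rw [abs_mul, abs_mul, abs_neg]
      nlinarith [mul_le_one₀ h4 (abs_nonneg _) h1, mul_le_one₀ h3 (abs_nonneg _) h2]
  have hP : ∀ (ω : EuclideanSpace ℝ (Fin n)) θ, HasDerivAt (fun θ => r * (Real.cos θ * ω i + Real.sin θ * ω j))
      (r * (-Real.sin θ * ω i + Real.cos θ * ω j)) θ := fun ω θ =>
    (((Real.hasDerivAt_cos θ).mul_const (ω i)).add ((Real.hasDerivAt_sin θ).mul_const (ω j))).const_mul r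
  have hQ : ∀ (ω : EuclideanSpace ℝ (Fin n)) θ, HasDerivAt (fun θ => r * (-Real.sin θ * ω i + Real.cos θ * ω j))
      (r * (-Real.cos θ * ω i + -Real.sin θ * ω j)) θ := fun ω θ =>
    (((Real.hasDerivAt_sin θ).neg.mul_const (ω i)).add ((Real.hasDerivAt_cos θ).mul_const (ω j))).const_mul r
  have hQb : ∀ θ (ω : EuclideanSpace ℝ (Fin n)), ‖ω‖ = 1 →
      |r * (-Real.sin θ * ω i + Real.cos θ * ω j)| ≤ |r| * 2 := fun θ ω hω => by
    rw [abs_mul]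
    exact mul_le_mul_of_nonneg_left (hb θ ω hω).2 (abs_nonneg _)
  have hRb : ∀ θ (ω : EuclideanSpace ℝ (Fin n)), ‖ω‖ = 1 →
      |r * (-Real.cos θ * ω i + -Real.sin θ * ω j)| ≤ |r| * 2 := fun θ ω hω => by
    rw [abs_mul, show -Real.cos θ * ω i + -Real.sin θ * ω j = -(Real.cos θ * ω i + Real.sin θ * ω j) by ring,
      abs_neg]
    exact mul_le_mul_of_nonneg_left (hb θ ω hω).1 (abs_nonneg _)
  have h1 : ∀ θ, ∫ ω, -Real.sin (r * (Real.cos θ * ω i + Real.sin θ * ω j)) *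
      (r * (-Real.sin θ * ω i + Real.cos θ * ω j)) ∂sphereMeasure n = 0 := by
    intro θ
    have := hasDerivAt_integral_of_bounded (sphereMeasure n)
      (φ := fun θ ω => Real.cos (r * (Real.cos θ * ω i + Real.sin θ * ω j)))
      (φ' := fun θ ω => -Real.sin (r * (Real.cos θ * ω i + Real.sin θ * ω j)) *
      (r * (-Real.sin θ * ω i + Real.cos θ * ω j)))
      (fun t => by fun_prop) (fun t => by fun_prop) (K := 1 + |r| * 2)
      (fun t => Filter.Eventually.of_forall fun ω => (Real.abs_cos_le_one _).trans (by simp)) ?_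
      (fun ω t => (hP ω t).cos) θ
    · simp only [hc] at this
      exact this.unique (hasDerivAt_const θ _)
    · filter_upwards [ae_sphereMeasure n] with ω hω t
      rw [abs_mul, abs_neg]
      have h1 := hQb t ω hω
      have h2 := Real.abs_sin_le_one (r * (Real.cos t * ω i + Real.sin t * ω j))
      nlinarith [abs_nonneg (r * (-Real.sin t * ω i + Real.cos t * ω j))]
  have h2 := hasDerivAt_integral_of_bounded (sphereMeasure n)
    (φ := fun θ ω => -Real.sin (r * (Real.cos θ * ω i + Real.sin θ * ω j)) *
      (r * (-Real.sin θ * ω i + Real.cos θ * ω j)))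
    (φ' := fun θ ω => -(Real.cos (r * (Real.cos θ * ω i + Real.sin θ * ω j)) *
      (r * (-Real.sin θ * ω i + Real.cos θ * ω j))) * (r * (-Real.sin θ * ω i + Real.cos θ * ω j)) +
      -Real.sin (r * (Real.cos θ * ω i + Real.sin θ * ω j)) * (r * (-Real.cos θ * ω i + -Real.sin θ * ω j)))
    (fun t => by fun_prop) (fun t => by fun_prop) (K := |r| * 2 + (|r| * 2) ^ 2) (fun t => ?_) ?_
    (fun ω t => (hP ω t).sin.neg.mul (hQ ω t)) 0
  · simp only [h1] at h2
    have h3 := h2.unique (hasDerivAt_const (0 : ℝ) (0 : ℝ))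
    simp only [Real.cos_zero, Real.sin_zero, one_mul, zero_mul, add_zero, neg_zero, zero_add, neg_mul] at h3
    have i1 : Integrable (fun ω : EuclideanSpace ℝ (Fin n) => ω j ^ 2 * Real.cos (r * ω i)) (sphereMeasure n) := by
      refine (integrable_const (1 : ℝ)).mono' (by fun_prop) ?_
      filter_upwards [ae_sphereMeasure n] with ω hω
      rw [Real.norm_eq_abs, abs_mul, abs_pow]
      exact mul_le_one₀ (pow_le_one₀ (abs_nonneg _) (abs_apply_le_one hω j)) (abs_nonneg _) (Real.abs_cos_le_one _)
    have i2 : Integrable (fun ω : EuclideanSpace ℝ (Fin n) => ω i * Real.sin (r * ω i)) (sphereMeasure n) := by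
      refine (integrable_const (1 : ℝ)).mono' (by fun_prop) ?_
      filter_upwards [ae_sphereMeasure n] with ω hω
      rw [Real.norm_eq_abs, abs_mul]
      exact mul_le_one₀ (abs_apply_le_one hω i) (abs_nonneg _) (Real.abs_sin_le_one _)
    have h4 : ∫ ω, (r * (ω i * Real.sin (r * ω i)) - r ^ 2 * (ω j ^ 2 * Real.cos (r * ω i))) ∂sphereMeasure n = 0 := by
      rw [← h3]
      congr 1; ext ω; ring
    rw [integral_sub (i2.const_mul r) (i1.const_mul _), integral_const_mul, integral_const_mul] at h4
    field_simp
    have : r * (∫ ω, ω i * Real.sin (r * ω i) ∂sphereMeasure n -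
      r * ∫ ω, ω j ^ 2 * Real.cos (r * ω i) ∂sphereMeasure n) = 0 := by linarith
    have := (mul_eq_zero.1 this).resolve_left hr
    linarith
  · filter_upwards [ae_sphereMeasure n] with ω hω
    rw [abs_mul, abs_neg]
    have h1 := hQb t ω hω
    have h2 := Real.abs_sin_le_one (r * (Real.cos t * ω i + Real.sin t * ω j))
    nlinarith [abs_nonneg (r * (-Real.sin t * ω i + Real.cos t * ω j)), sq_nonneg (|r| * 2)]
  · filter_upwards [ae_sphereMeasure n] with ω hω t
    refine (abs_add_le _ _).trans ?_
    have h1 := hQb t ω hω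
    have h3 := hRb t ω hω
    have h2 := Real.abs_sin_le_one (r * (Real.cos t * ω i + Real.sin t * ω j))
    have h4 := Real.abs_cos_le_one (r * (Real.cos t * ω i + Real.sin t * ω j))
    rw [add_comm]
    refine add_le_add ?_ ?_
    · rw [abs_mul, abs_neg]
      nlinarith [abs_nonneg (r * (-Real.cos t * ω i + -Real.sin t * ω j))]
    · rw [neg_mul, abs_neg, mul_assoc, abs_mul, ← sq, abs_pow]
      have h5 : |r * (-Real.sin t * ω i + Real.cos t * ω j)| ^ 2 ≤ (|r| * 2) ^ 2 := by gcongr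
      have h6 := sq_nonneg |r * (-Real.sin t * ω i + Real.cos t * ω j)|
      nlinarith

theorem sphereCos_ode {n : ℕ} (i : Fin n) {r : ℝ} (hr : r ≠ 0) :
    ∫ ω, -(ω i ^ 2 * Real.cos (r * ω i)) ∂sphereMeasure n =
      -sphereCos i r - (n - 1) / r * ∫ ω, -(ω i * Real.sin (r * ω i)) ∂sphereMeasure n := by
  have hint : ∀ j, Integrable (fun ω : EuclideanSpace ℝ (Fin n) => ω j ^ 2 * Real.cos (r * ω i)) (sphereMeasure n) := by
    intro j
    refine (integrable_const (1 : ℝ)).mono' (by fun_prop) ?_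
    filter_upwards [ae_sphereMeasure n] with ω hω
    rw [Real.norm_eq_abs, abs_mul, abs_pow]
    exact mul_le_one₀ (pow_le_one₀ (abs_nonneg _) (abs_apply_le_one hω j)) (abs_nonneg _) (Real.abs_cos_le_one _)
  have h1 : sphereCos i r = ∑ j, ∫ ω, ω j ^ 2 * Real.cos (r * ω i) ∂sphereMeasure n := by
    rw [← integral_finsetSum _ fun j _ => hint j, sphereCos]
    refine integral_congr_ae ?_
    filter_upwards [ae_sphereMeasure n] with ω hω
    rw [← Finset.sum_mul, ← EuclideanSpace.real_norm_sq_eq, hω, one_pow, one_mul]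
  rw [← Finset.add_sum_erase _ _ (Finset.mem_univ i), Finset.sum_congr rfl (fun j hj =>
    integral_sq_mul_cos_eq (Finset.ne_of_mem_erase hj).symm hr), Finset.sum_const,
    Finset.card_erase_of_mem (Finset.mem_univ i), Finset.card_univ, Fintype.card_fin, nsmul_eq_mul,
    Nat.cast_sub (by have := i.pos; omega)] at h1
  rw [h1, integral_neg, integral_neg]
  push_cast
  ring

theorem abs_sphereCos_le {n : ℕ} (i : Fin n) (r : ℝ) : |sphereCos i r| ≤ (sphereMeasure n).real Set.univ := by
  have := norm_integral_le_of_norm_le_const (μ := sphereMeasure n) (C := 1) (f := fun ω => Real.cos (r * ω i))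
    (Filter.Eventually.of_forall fun ω => Real.abs_cos_le_one _)
  simpa [sphereCos] using this

theorem exists_rpow_mul_sphereCos_asymptotics {n : ℕ} (i : Fin n) :
    ∃ A B : ℂ, ∃ D > 0, ∀ z : ℝ, 0 < z →
      ‖((z ^ (((n : ℝ) - 1) / 2) * sphereCos i z : ℝ) : ℂ) - A * Complex.exp (Complex.I * z) -
        B * Complex.exp (-(Complex.I * z))‖ ≤ D * min 1 z⁻¹ := by
  set p : ℝ := ((n : ℝ) - 1) / 2 with hp
  have hp0 : 0 ≤ p := by
    have : (1 : ℝ) ≤ n := by exact_mod_cast i.pos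
    rw [hp]; linarith
  set u' : ℝ → ℝ := fun r => ∫ ω, -(ω i * Real.sin (r * ω i)) ∂sphereMeasure n with hu'
  have d1 : ∀ z > 0, HasDerivAt (fun z => z ^ p * sphereCos i z)
      (p * z ^ (p - 1) * sphereCos i z + z ^ p * u' z) z := by
    intro z hz
    exact (Real.hasDerivAt_rpow_const (Or.inl hz.ne')).mul (hasDerivAt_sphereCos i z)
  have d2 : ∀ z > 0, HasDerivAt (fun z => p * z ^ (p - 1) * sphereCos i z + z ^ p * u' z)
      (p * (p - 1) * (z ^ p * sphereCos i z) / z ^ 2 - z ^ p * sphereCos i z) z := by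
    intro z hz
    have e1 := ((Real.hasDerivAt_rpow_const (p := p - 1) (Or.inl hz.ne')).const_mul p).mul
      (hasDerivAt_sphereCos i z)
    have e2 := (Real.hasDerivAt_rpow_const (p := p) (Or.inl hz.ne')).mul (hasDerivAt_deriv_sphereCos i z)
    refine (e1.add e2).congr_deriv ?_
    rw [sphereCos_ode i hz.ne']
    have r1 : z ^ (p - 1) = z ^ p / z := by rw [Real.rpow_sub_one hz.ne']
    have r2 : z ^ (p - 1 - 1) = z ^ p / z / z := by rw [Real.rpow_sub_one hz.ne', r1]
    have hn : (n : ℝ) - 1 = 2 * p := by rw [hp]; ring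
    rw [r1, r2, hn]
    simp only
    field_simp
    ring
  obtain ⟨A, B, D, hD, h⟩ := exists_norm_sub_exp_le d1 d2
  set V := (sphereMeasure n).real Set.univ
  refine ⟨A, B, D + V + ‖A‖ + ‖B‖, by positivity, fun z hz => ?_⟩
  rcases le_total 1 z with h1 | h1
  · rw [min_eq_right (inv_le_one_of_one_le₀ h1)]
    refine (h z h1).trans ?_
    rw [div_eq_mul_inv]
    gcongr
    have : 0 ≤ V + ‖A‖ + ‖B‖ := by positivity
    linarith
  · rw [min_eq_left (one_le_inv₀ hz |>.2 h1), mul_one]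
    refine (norm_sub_le _ _).trans ?_
    have n1 : ‖Complex.exp (Complex.I * z)‖ = 1 := by
      rw [mul_comm, Complex.norm_exp_ofReal_mul_I]
    have n2 : ‖Complex.exp (-(Complex.I * z))‖ = 1 := by
      rw [show -(Complex.I * (z : ℂ)) = ((-z : ℝ) : ℂ) * Complex.I by push_cast; ring,
        Complex.norm_exp_ofReal_mul_I]
    rw [norm_mul B, n2, mul_one]
    refine add_le_add ((norm_sub_le _ _).trans ?_) le_rfl
    rw [norm_mul, n1, mul_one, Complex.norm_real, Real.norm_eq_abs, abs_mul]
    have h2 : |z ^ p| ≤ 1 := by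
      rw [abs_of_nonneg (by positivity)]
      exact Real.rpow_le_one hz.le h1 hp0
    have h3 := abs_sphereCos_le i z
    have : |z ^ p| * |sphereCos i z| ≤ 1 * V := mul_le_mul h2 h3 (abs_nonneg _) zero_le_one
    linarith

theorem FT_eq_of_norm_eq {n : ℕ} {f : EuclideanSpace ℝ (Fin n) → ℂ}
    (hf : ∀ x y : EuclideanSpace ℝ (Fin n), ‖x‖ = ‖y‖ → f x = f y)
    {ξ η : EuclideanSpace ℝ (Fin n)} (h : ‖ξ‖ = ‖η‖) : FT n f ξ = FT n f η := by
  set L := (ℝ ∙ (ξ - η))ᗮ.reflection with hL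
  have hLx : L ξ = η := Submodule.reflection_sub h
  unfold FT
  rw [← L.measurePreserving.integral_comp L.toHomeomorph.measurableEmbedding
    (fun x => Complex.exp (-(Complex.I * ((⟪x, η⟫_ℝ : ℝ) : ℂ))) * f x)]
  refine integral_congr_ae (Filter.Eventually.of_forall fun x => ?_)
  simp only [← hLx, LinearIsometryEquiv.inner_map_map, hf (L x) x (L.norm_map x)]

open FourierTransform in
theorem exists_schwartz_eq_FT {n : ℕ} {f : EuclideanSpace ℝ (Fin n) → ℂ}
    (hf : ContDiff ℝ (⊤ : ℕ∞) f) (hc : HasCompactSupport f) :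
    ∃ G : SchwartzMap (EuclideanSpace ℝ (Fin n)) ℂ, ∀ ξ, FT n f ξ = G ξ := by
  have h2 : ((2 * π)⁻¹ : ℝ) ≠ 0 := by positivity
  refine ⟨SchwartzMap.compCLMOfContinuousLinearEquiv ℂ
    (ContinuousLinearEquiv.smulLeft (R₁ := ℝ) (M₁ := EuclideanSpace ℝ (Fin n)) (Units.mk0 _ h2))
    (𝓕 (hc.toSchwartzMap hf)), fun ξ => ?_⟩
  rw [SchwartzMap.compCLMOfContinuousLinearEquiv_apply, Function.comp_apply, SchwartzMap.fourier_coe,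
    Real.fourier_eq']
  unfold FT
  refine integral_congr_ae (Filter.Eventually.of_forall fun x => ?_)
  have : (ContinuousLinearEquiv.smulLeft (R₁ := ℝ) (M₁ := EuclideanSpace ℝ (Fin n)) (Units.mk0 _ h2)) ξ
    = (2 * π)⁻¹ • ξ := rfl
  simp only [this, inner_smul_right, HasCompactSupport.toSchwartzMap_toFun, smul_eq_mul]
  congr 2
  have hpi : (π : ℂ) ≠ 0 := by exact_mod_cast Real.pi_ne_zero
  push_cast
  field_simp

theorem SchwartzMap.exists_norm_le_rpow {E : Type*} [NormedAddCommGroup E] [NormedSpace ℝ E]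
    (G : SchwartzMap E ℂ) (k : ℝ) :
    ∃ C, ∀ x, ‖G x‖ ≤ C * (1 + ‖x‖) ^ (-k) := by
  obtain ⟨m, hm⟩ := exists_nat_ge k
  refine ⟨2 ^ m * (Finset.Iic (m, 0)).sup (fun m => SchwartzMap.seminorm ℂ m.1 m.2) G,
    fun x => ?_⟩
  have := SchwartzMap.one_add_le_sup_seminorm_apply (𝕜 := ℂ) (m := (m, 0)) le_rfl le_rfl G x
  simp only [norm_iteratedFDeriv_zero] at this
  have h1 : (1 : ℝ) ≤ 1 + ‖x‖ := by linarith [norm_nonneg x]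
  rw [Real.rpow_neg (by linarith), ← div_eq_mul_inv, le_div_iff₀ (by positivity)]
  refine le_trans ?_ this
  rw [mul_comm]
  refine mul_le_mul_of_nonneg_right ?_ (norm_nonneg _)
  rw [← Real.rpow_natCast]
  exact Real.rpow_le_rpow_of_exponent_le h1 hm

theorem integrable_rpow_mul_sq_norm_schwartz {n : ℕ}
    (G : SchwartzMap (EuclideanSpace ℝ (Fin n)) ℂ) {s : ℝ} (hs : 0 ≤ s) :
    Integrable (fun ξ => (1 + ‖ξ‖ ^ 2) ^ s * ‖G ξ‖ ^ 2) := by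
  obtain ⟨C, hC⟩ := G.exists_norm_le_rpow (2 * s)
  have hC0 : 0 ≤ C := by simpa using (norm_nonneg _).trans (hC 0)
  refine (G.integrable.norm.const_mul C).mono' ?_ (Filter.Eventually.of_forall fun ξ => ?_)
  · refine Continuous.aestronglyMeasurable ?_
    have := G.continuous
    refine Continuous.mul (Continuous.rpow_const (by fun_prop) fun x => Or.inl ?_) (by fun_prop)
    positivity
  · have h1 : (1 : ℝ) ≤ 1 + ‖ξ‖ := by linarith [norm_nonneg ξ]
    rw [Real.norm_of_nonneg (by positivity), sq ‖G ξ‖, ← mul_assoc]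
    refine mul_le_mul_of_nonneg_right ?_ (norm_nonneg _)
    have h2 : (1 + ‖ξ‖ ^ 2) ^ s ≤ (1 + ‖ξ‖) ^ (2 * s) := by
      rw [Real.rpow_mul (by linarith)]
      refine Real.rpow_le_rpow (by positivity) ?_ hs
      rw [Real.rpow_two]; nlinarith [norm_nonneg ξ]
    calc _ ≤ (1 + ‖ξ‖) ^ (2 * s) * (C * (1 + ‖ξ‖) ^ (-(2 * s))) :=
          mul_le_mul h2 (hC ξ) (norm_nonneg _) (by positivity)
      _ = C * ((1 + ‖ξ‖) ^ (2 * s) * (1 + ‖ξ‖) ^ (-(2 * s))) := by ring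
      _ = C := by rw [← Real.rpow_add (by linarith)]; simp

/-- The radial profile of a function on `ℝⁿ`, weighted by `ρ^((n-1)/2)`. -/
def radialProfile {n : ℕ} (i : Fin n) (G : EuclideanSpace ℝ (Fin n) → ℂ) (ρ : ℝ) : ℂ :=
  ((ρ ^ (((n : ℝ) - 1) / 2) : ℝ) : ℂ) * G (EuclideanSpace.single i ρ)

theorem continuous_radialProfile {n : ℕ} (hn : 1 ≤ n) (i : Fin n)
    {G : EuclideanSpace ℝ (Fin n) → ℂ} (hG : Continuous G) : Continuous (radialProfile i G) := by
  have hn' : (1 : ℝ) ≤ n := by exact_mod_cast hn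
  unfold radialProfile
  refine Continuous.mul ?_ (hG.comp ?_)
  · exact Complex.continuous_ofReal.comp (Real.continuous_rpow_const (by linarith))
  · exact (isometry_iff_dist_eq.2 fun x y =>
      PiLp.dist_single_same 2 (fun _ => ℝ) i x y).continuous

theorem integrableOn_radialProfile {n : ℕ} (hn : 1 ≤ n) (i : Fin n)
    (G : SchwartzMap (EuclideanSpace ℝ (Fin n)) ℂ) :
    IntegrableOn (radialProfile i G) (Set.Ioi 0) := by
  have hn' : (1 : ℝ) ≤ n := by exact_mod_cast hn
  obtain ⟨C, hC⟩ := G.exists_norm_le_rpow (((n : ℝ) - 1) / 2 + 2)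
  have hC0 : 0 ≤ C := by simpa using (norm_nonneg _).trans (hC 0)
  have hi : Integrable (fun x : ℝ => C * (1 + ‖x‖) ^ (-(2 : ℝ))) :=
    (integrable_one_add_norm (by simp)).const_mul C
  refine hi.integrableOn.mono' (continuous_radialProfile hn i G.continuous).aestronglyMeasurable ?_
  refine (ae_restrict_mem measurableSet_Ioi).mono fun ρ (hρ : 0 < ρ) => ?_
  have h1 := hC (EuclideanSpace.single i ρ)
  rw [PiLp.norm_single, Real.norm_of_nonneg hρ.le] at h1
  rw [radialProfile, norm_mul, Complex.norm_real, Real.norm_of_nonneg (by positivity),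
    Real.norm_of_nonneg hρ.le]
  calc _ ≤ (1 + ρ) ^ (((n : ℝ) - 1) / 2) * (C * (1 + ρ) ^ (-(((n : ℝ) - 1) / 2 + 2))) :=
        mul_le_mul (Real.rpow_le_rpow hρ.le (by linarith) (by linarith)) h1 (norm_nonneg _)
          (by positivity)
    _ = C * ((1 + ρ) ^ (((n : ℝ) - 1) / 2) * (1 + ρ) ^ (-(((n : ℝ) - 1) / 2 + 2))) := by ring
    _ = _ := by rw [← Real.rpow_add (by linarith)]; congr 2; ring

open Set in
theorem integral_eq_integral_polar {n : ℕ} (hn : 1 ≤ n) {H : EuclideanSpace ℝ (Fin n) → ℂ}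
    (hH : Integrable H) :
    ∫ x, H x = ∫ ρ in Ioi (0 : ℝ), ((ρ ^ (n - 1) : ℝ) : ℂ) * ∫ ω, H (ρ • ω) ∂sphereMeasure n := by
  have : Nontrivial (EuclideanSpace ℝ (Fin n)) := by
    have : Nonempty (Fin n) := ⟨⟨0, hn⟩⟩
    infer_instance
  set μ : Measure (EuclideanSpace ℝ (Fin n)) := volume
  have hd : Module.finrank ℝ (EuclideanSpace ℝ (Fin n)) = n := finrank_euclideanSpace_fin
  have hmp := μ.measurePreserving_homeomorphUnitSphereProd
  rw [hd] at hmp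
  have h0 := integral_subtype_comap (μ := μ) (measurableSet_singleton (0 : EuclideanSpace ℝ (Fin n))).compl H
  rw [restrict_compl_singleton] at h0
  have he := (homeomorphUnitSphereProd (EuclideanSpace ℝ (Fin n))).measurableEmbedding
  set F : Metric.sphere (0 : EuclideanSpace ℝ (Fin n)) 1 × Ioi (0 : ℝ) → ℂ :=
    fun q => H (q.2.1 • q.1.1) with hF
  have hcomp : ∀ x, F (homeomorphUnitSphereProd (EuclideanSpace ℝ (Fin n)) x) = H x := by
    intro x
    simp only [hF, homeomorphUnitSphereProd_apply_fst_coe, homeomorphUnitSphereProd_apply_snd_coe]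
    rw [smul_inv_smul₀ (norm_ne_zero_iff.2 x.2)]
  have h1 : ∫ x : ({(0)}ᶜ : Set (EuclideanSpace ℝ (Fin n))), H x ∂(μ.comap (↑))
      = ∫ q, F q ∂μ.toSphere.prod (.volumeIoiPow (n - 1)) := by
    rw [← hmp.integral_comp he]
    simp only [hcomp]
  have hFi : Integrable F (μ.toSphere.prod (.volumeIoiPow (n - 1))) := by
    rw [← hmp.integrable_comp_emb he]
    have : F ∘ homeomorphUnitSphereProd (EuclideanSpace ℝ (Fin n)) =
        fun x : ({(0)}ᶜ : Set (EuclideanSpace ℝ (Fin n))) => H x := funext hcomp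
    rw [this]
    have hm := MeasurableEmbedding.subtype_coe
      (measurableSet_singleton (0 : EuclideanSpace ℝ (Fin n))).compl
    refine hm.integrable_map_iff.1 ?_
    rw [hm.map_comap]
    exact hH.mono_measure Measure.restrict_le_self
  rw [← h0, h1, integral_prod_symm _ hFi]
  simp only [Measure.volumeIoiPow, ENNReal.ofReal]
  rw [integral_withDensity_eq_integral_smul,
    integral_subtype_comap measurableSet_Ioi fun a ↦ Real.toNNReal (a ^ (n - 1)) •
      ∫ ω : Metric.sphere (0 : EuclideanSpace ℝ (Fin n)) 1, H (a • ω.1) ∂μ.toSphere]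
  · refine setIntegral_congr_fun measurableSet_Ioi fun x hx ↦ ?_
    have hx' : 0 < x := hx
    simp only [NNReal.smul_def, Real.coe_toNNReal _ (pow_nonneg hx'.le _), Complex.real_smul]
    congr 1
    rw [sphereMeasure, (MeasurableEmbedding.subtype_coe Metric.isClosed_sphere.measurableSet).integral_map]
  · exact (measurable_subtype_coe.pow_const _).real_toNNReal

open Set in
theorem lintegral_fun_norm_eq {n : ℕ} (hn : 1 ≤ n) {h : ℝ → ℝ≥0∞} (hh : Measurable h) :
    ∫⁻ x : EuclideanSpace ℝ (Fin n), h ‖x‖ =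
      sphereMeasure n univ * ∫⁻ ρ in Ioi (0 : ℝ), ENNReal.ofReal (ρ ^ (n - 1)) * h ρ := by
  have : Nontrivial (EuclideanSpace ℝ (Fin n)) := by
    have : Nonempty (Fin n) := ⟨⟨0, hn⟩⟩
    infer_instance
  set μ : Measure (EuclideanSpace ℝ (Fin n)) := volume
  have hd : Module.finrank ℝ (EuclideanSpace ℝ (Fin n)) = n := finrank_euclideanSpace_fin
  have hmp := μ.measurePreserving_homeomorphUnitSphereProd
  rw [hd] at hmp
  have h0 := lintegral_subtype_comap (μ := μ) (measurableSet_singleton (0 : EuclideanSpace ℝ (Fin n))).compl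
    (fun x => h ‖x‖)
  rw [restrict_compl_singleton] at h0
  have h1 : ∫⁻ x : ({(0)}ᶜ : Set (EuclideanSpace ℝ (Fin n))), h ‖x.1‖ ∂(μ.comap (↑))
      = ∫⁻ q, h q.2.1 ∂μ.toSphere.prod (.volumeIoiPow (n - 1)) := by
    rw [← hmp.lintegral_comp (by fun_prop)]
    simp
  rw [← h0, h1, lintegral_prod_symm _ (by fun_prop)]
  simp only [lintegral_const, Measure.volumeIoiPow]
  rw [lintegral_mul_const _ (by fun_prop), lintegral_withDensity_eq_lintegral_mul _ (by fun_prop) (by fun_prop), mul_comm]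
  congr 1
  · rw [sphereMeasure, Measure.map_apply measurable_subtype_coe MeasurableSet.univ, preimage_univ]
  · exact lintegral_subtype_comap (μ := volume) measurableSet_Ioi (fun ρ => ENNReal.ofReal (ρ ^ (n - 1)) * h ρ)

theorem integral_exp_inner_sphereMeasure {n : ℕ} (i : Fin n) (x : EuclideanSpace ℝ (Fin n)) (ρ : ℝ) :
    ∫ ω, Complex.exp (Complex.I * ((⟪x, ρ • ω⟫_ℝ : ℝ) : ℂ)) ∂sphereMeasure n
      = ((sphereCos i (‖x‖ * ρ) : ℝ) : ℂ) := by
  set F : EuclideanSpace ℝ (Fin n) → ℂ := fun ω => Complex.exp (Complex.I * ((⟪x, ρ • ω⟫_ℝ : ℝ) : ℂ)) with hF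
  have hFi : Integrable F (sphereMeasure n) := by
    refine (integrable_const (1 : ℝ)).mono' (Continuous.aestronglyMeasurable (by fun_prop))
      (Filter.Eventually.of_forall fun ω => ?_)
    simp only [hF]
    rw [mul_comm, Complex.norm_exp_ofReal_mul_I]
  set L := LinearIsometryEquiv.neg ℝ (E := EuclideanSpace ℝ (Fin n))
  have hs : ∫ ω, F ω ∂sphereMeasure n = ∫ ω, F (-ω) ∂sphereMeasure n :=
    ((measurePreserving_sphereMeasure n L).integral_comp L.toHomeomorph.measurableEmbedding F).symm
  have hFi' : Integrable (fun ω => F (-ω)) (sphereMeasure n) := by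
    refine (integrable_const (1 : ℝ)).mono' (Continuous.aestronglyMeasurable (by fun_prop))
      (Filter.Eventually.of_forall fun ω => ?_)
    simp only [hF]
    rw [mul_comm, Complex.norm_exp_ofReal_mul_I]
  have h2 : ∫ ω, F ω ∂sphereMeasure n = ∫ ω, ((Real.cos ⟪ρ • x, ω⟫_ℝ : ℝ) : ℂ) ∂sphereMeasure n := by
    have : (2 : ℂ) * ∫ ω, F ω ∂sphereMeasure n
        = 2 * ∫ ω, ((Real.cos ⟪ρ • x, ω⟫_ℝ : ℝ) : ℂ) ∂sphereMeasure n := by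
      rw [two_mul]
      nth_rewrite 2 [hs]
      rw [← integral_add hFi hFi', ← integral_const_mul]
      refine integral_congr_ae (Filter.Eventually.of_forall fun ω => ?_)
      simp only [hF, inner_neg_right, inner_smul_right, inner_smul_left]
      push_cast
      rw [Complex.two_cos]
      simp only [conj_trivial]
      congr 1 <;> congr 1 <;> ring
    exact mul_left_cancel₀ two_ne_zero this
  rw [h2, integral_complex_ofReal, integral_cos_inner_eq n (y := EuclideanSpace.single i (‖x‖ * ρ)),
    sphereCos]
  · simp [EuclideanSpace.inner_single_left]
  · rw [PiLp.norm_single, norm_smul, norm_mul, norm_norm, mul_comm]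

theorem continuous_sphereCos {n : ℕ} (i : Fin n) : Continuous (sphereCos i) :=
  continuous_iff_continuousAt.2 fun r => (hasDerivAt_sphereCos i r).continuousAt

/-- The normalized Bessel-type kernel `z^((n-1)/2) ∫ cos(z ω_i) dσ(ω)`. -/
def sphereKernel {n : ℕ} (i : Fin n) (z : ℝ) : ℝ := z ^ (((n : ℝ) - 1) / 2) * sphereCos i z

theorem measurable_sphereKernel {n : ℕ} (i : Fin n) : Measurable (sphereKernel i) := by
  have := (continuous_sphereCos i).measurable
  unfold sphereKernel
  fun_prop

/-- The one-dimensional oscillatory integral representing `S^a f` for radial `f`. -/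
def radialOsc {n : ℕ} (a : ℝ) (i : Fin n) (g : ℝ → ℂ) (r t : ℝ) : ℂ :=
  ∫ ρ in Set.Ioi (0 : ℝ), ((sphereKernel i (r * ρ) : ℝ) : ℂ) *
    (Complex.exp (Complex.I * ((t * ρ ^ a : ℝ) : ℂ)) * g ρ)

theorem Sosc_eq_radialOsc {n : ℕ} {a : ℝ} (ha : 0 < a) (i : Fin n)
    {f : EuclideanSpace ℝ (Fin n) → ℂ}
    (hf : ∀ x y : EuclideanSpace ℝ (Fin n), ‖x‖ = ‖y‖ → f x = f y)
    {G : EuclideanSpace ℝ (Fin n) → ℂ} (hGc : Continuous G) (hGi : Integrable G)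
    (hG : ∀ ξ, FT n f ξ = G ξ) {x : EuclideanSpace ℝ (Fin n)} (hx : x ≠ 0) (t : ℝ) :
    Sosc n a f x t = ((((2 * π) ^ n)⁻¹ * (‖x‖ ^ (((n : ℝ) - 1) / 2))⁻¹ : ℝ) : ℂ) *
      radialOsc a i (radialProfile i G) ‖x‖ t := by
  have hn : 1 ≤ n := Nat.one_le_iff_ne_zero.2 fun h => by subst h; exact i.elim0
  have hr : 0 < ‖x‖ := norm_pos_iff.2 hx
  unfold Sosc
  simp only [hG]
  have hHi : Integrable fun ξ : EuclideanSpace ℝ (Fin n) =>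
      Complex.exp (Complex.I * ((⟪x, ξ⟫_ℝ + t * ‖ξ‖ ^ a : ℝ) : ℂ)) * G ξ := by
    refine hGi.norm.mono' (Continuous.aestronglyMeasurable ?_)
      (Filter.Eventually.of_forall fun ξ => ?_)
    · have : Continuous fun ξ : EuclideanSpace ℝ (Fin n) => ‖ξ‖ ^ a :=
        continuous_norm.rpow_const fun _ => Or.inr ha.le
      fun_prop
    · rw [norm_mul, mul_comm Complex.I, Complex.norm_exp_ofReal_mul_I, one_mul]
  rw [integral_eq_integral_polar hn hHi, Complex.ofReal_mul, Complex.ofReal_inv, mul_assoc]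
  congr 1
  rw [radialOsc, ← integral_const_mul]
  refine setIntegral_congr_fun measurableSet_Ioi fun ρ (hρ : 0 < ρ) => ?_
  have hin : ∫ ω, Complex.exp (Complex.I * ((⟪x, ρ • ω⟫_ℝ + t * ‖ρ • ω‖ ^ a : ℝ) : ℂ)) * G (ρ • ω)
        ∂sphereMeasure n = ((sphereCos i (‖x‖ * ρ) : ℝ) : ℂ) *
          (Complex.exp (Complex.I * ((t * ρ ^ a : ℝ) : ℂ)) * G (EuclideanSpace.single i ρ)) := by
    rw [← integral_exp_inner_sphereMeasure, ← integral_mul_const]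
    refine integral_congr_ae ?_
    filter_upwards [ae_sphereMeasure n] with ω hω
    have h1 : ‖ρ • ω‖ = ρ := by rw [norm_smul, hω, mul_one, Real.norm_of_nonneg hρ.le]
    have h2 : G (ρ • ω) = G (EuclideanSpace.single i ρ) := by
      rw [← hG, ← hG]
      exact FT_eq_of_norm_eq hf (by rw [h1, PiLp.norm_single, Real.norm_of_nonneg hρ.le])
    rw [h1, h2, Complex.ofReal_add, mul_add, Complex.exp_add, mul_assoc]
  simp only [hin, sphereKernel, radialProfile]
  have h3 : (ρ ^ (n - 1) : ℝ) = (‖x‖ ^ (((n : ℝ) - 1) / 2))⁻¹ *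
      ((‖x‖ * ρ) ^ (((n : ℝ) - 1) / 2) * ρ ^ (((n : ℝ) - 1) / 2)) := by
    rw [Real.mul_rpow hr.le hρ.le, mul_assoc, inv_mul_cancel_left₀ (by positivity),
      ← Real.rpow_add hρ, add_halves, ← Real.rpow_natCast]
    congr 1
    push_cast [hn]
    rfl
  rw [h3]
  push_cast
  ring

theorem measurable_integral_Ioi_right {F : ℝ → ℝ → ℂ} (hF : Measurable (Function.uncurry F)) :
    Measurable fun r => ∫ ρ in Set.Ioi (0 : ℝ), F r ρ :=
  (hF.stronglyMeasurable.integral_prod_right (ν := volume.restrict (Set.Ioi (0 : ℝ)))).measurable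

theorem integrable_osc_mul (a κ : ℝ) {τ : ℝ → ℝ} (hτ : Measurable τ) {g : ℝ → ℂ}
    (hg : Measurable g) (hgi : IntegrableOn g (Set.Ioi 0)) (r : ℝ) :
    Integrable (fun ρ => osc a κ τ r ρ * g ρ) (volume.restrict (Set.Ioi (0 : ℝ))) := by
  have hm : Measurable fun ρ => osc a κ τ r ρ := (measurable_osc a κ hτ).of_uncurry_left
  refine Integrable.mono' (g := fun ρ => ‖g ρ‖) (Integrable.norm hgi) (hm.mul hg).aestronglyMeasurable
    (Filter.Eventually.of_forall fun ρ => ?_)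
  rw [norm_mul, norm_osc, one_mul]

theorem enorm_radialOsc_le {n : ℕ} (a : ℝ) (i : Fin n) {A B : ℂ} {D : ℝ} (hD : 0 < D)
    (hAB : ∀ z : ℝ, 0 < z → ‖((sphereKernel i z : ℝ) : ℂ) - A * Complex.exp (Complex.I * z) -
      B * Complex.exp (-(Complex.I * z))‖ ≤ D * min 1 z⁻¹)
    {τ : ℝ → ℝ} (hτ : Measurable τ) {g : ℝ → ℂ}
    (hg : Measurable g) (hgi : IntegrableOn g (Set.Ioi 0)) {r : ℝ} (hr : 0 < r) :
    ‖radialOsc a i g r (τ r)‖ₑ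
      ≤ ‖A * (∫ ρ in Set.Ioi (0 : ℝ), osc a 1 τ r ρ * g ρ) +
          B * (∫ ρ in Set.Ioi (0 : ℝ), osc a (-1) τ r ρ * g ρ)‖ₑ +
        ENNReal.ofReal D * ∫⁻ ρ in Set.Ioi (0 : ℝ), ENNReal.ofReal (min 1 (r * ρ)⁻¹) * ‖g ρ‖ₑ := by
  have hi := fun κ => integrable_osc_mul a κ hτ hg hgi r
  have hbd : ∀ ρ ∈ Set.Ioi (0 : ℝ), ‖((sphereKernel i (r * ρ) : ℝ) : ℂ) *
      (Complex.exp (Complex.I * ((τ r * ρ ^ a : ℝ) : ℂ)) * g ρ) -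
        (A * (osc a 1 τ r ρ * g ρ) + B * (osc a (-1) τ r ρ * g ρ))‖ ≤
        D * min 1 (r * ρ)⁻¹ * ‖g ρ‖ := by
    intro ρ hρ
    have h := hAB (r * ρ) (mul_pos hr hρ)
    have he : ((sphereKernel i (r * ρ) : ℝ) : ℂ) *
      (Complex.exp (Complex.I * ((τ r * ρ ^ a : ℝ) : ℂ)) * g ρ) -
        (A * (osc a 1 τ r ρ * g ρ) + B * (osc a (-1) τ r ρ * g ρ)) =
        (((sphereKernel i (r * ρ) : ℝ) : ℂ) - A * Complex.exp (Complex.I * (r * ρ : ℝ)) -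
          B * Complex.exp (-(Complex.I * (r * ρ : ℝ)))) *
          (Complex.exp (Complex.I * ((τ r * ρ ^ a : ℝ) : ℂ)) * g ρ) := by
      have e1 : osc a 1 τ r ρ = Complex.exp (Complex.I * (r * ρ : ℝ)) *
          Complex.exp (Complex.I * ((τ r * ρ ^ a : ℝ) : ℂ)) := by
        rw [osc, ← Complex.exp_add]; congr 1; push_cast; ring
      have e2 : osc a (-1) τ r ρ = Complex.exp (-(Complex.I * (r * ρ : ℝ))) *
          Complex.exp (Complex.I * ((τ r * ρ ^ a : ℝ) : ℂ)) := by
        rw [osc, ← Complex.exp_add]; congr 1; push_cast; ring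
      rw [e1, e2]; ring
    rw [he, norm_mul, norm_mul, mul_comm Complex.I ((τ r * ρ ^ a : ℝ) : ℂ),
      Complex.norm_exp_ofReal_mul_I, one_mul]
    exact mul_le_mul_of_nonneg_right h (norm_nonneg _)
  have hmk : Measurable fun ρ : ℝ => ((sphereKernel i (r * ρ) : ℝ) : ℂ) *
      (Complex.exp (Complex.I * ((τ r * ρ ^ a : ℝ) : ℂ)) * g ρ) := by
    have := measurable_sphereKernel i
    have := hg
    fun_prop
  have hAi : Integrable (fun ρ => A * (osc a 1 τ r ρ * g ρ) + B * (osc a (-1) τ r ρ * g ρ))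
      (volume.restrict (Set.Ioi (0 : ℝ))) := ((hi 1).const_mul A).add ((hi (-1)).const_mul B)
  have hdi : Integrable (fun ρ => ((sphereKernel i (r * ρ) : ℝ) : ℂ) *
      (Complex.exp (Complex.I * ((τ r * ρ ^ a : ℝ) : ℂ)) * g ρ) -
        (A * (osc a 1 τ r ρ * g ρ) + B * (osc a (-1) τ r ρ * g ρ)))
      (volume.restrict (Set.Ioi (0 : ℝ))) := by
    refine (Integrable.const_mul (Integrable.norm hgi) D).mono' (hmk.aestronglyMeasurable.sub hAi.aestronglyMeasurable) ?_
    refine (ae_restrict_mem measurableSet_Ioi).mono fun ρ hρ => (hbd ρ hρ).trans ?_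
    rw [mul_assoc]
    refine mul_le_mul_of_nonneg_left ?_ hD.le
    exact mul_le_of_le_one_left (norm_nonneg _) (min_le_left _ _)
  have hsplit : radialOsc a i g r (τ r) = (A * (∫ ρ in Set.Ioi (0 : ℝ), osc a 1 τ r ρ * g ρ) +
        B * (∫ ρ in Set.Ioi (0 : ℝ), osc a (-1) τ r ρ * g ρ)) +
      ∫ ρ in Set.Ioi (0 : ℝ), (((sphereKernel i (r * ρ) : ℝ) : ℂ) *
      (Complex.exp (Complex.I * ((τ r * ρ ^ a : ℝ) : ℂ)) * g ρ) -
        (A * (osc a 1 τ r ρ * g ρ) + B * (osc a (-1) τ r ρ * g ρ))) := by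
    rw [← integral_const_mul, ← integral_const_mul,
      ← integral_add ((hi 1).const_mul A) ((hi (-1)).const_mul B), ← integral_add hAi hdi,
      radialOsc]
    refine integral_congr_ae (Filter.Eventually.of_forall fun ρ => ?_)
    ring
  rw [hsplit]
  refine (enorm_add_le _ _).trans (add_le_add le_rfl ?_)
  refine (enorm_integral_le_lintegral_enorm _).trans ?_
  rw [← lintegral_const_mul' _ _ ENNReal.ofReal_ne_top]
  refine setLIntegral_mono' measurableSet_Ioi fun ρ hρ => ?_
  rw [← ofReal_norm, ← ofReal_norm, ← ENNReal.ofReal_mul (by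
    have : 0 < r * ρ := mul_pos hr hρ
    positivity), ← ENNReal.ofReal_mul hD.le]
  exact ENNReal.ofReal_le_ofReal ((hbd ρ hρ).trans_eq (mul_assoc _ _ _))

theorem exists_lintegral_radialOsc_le {a s : ℝ} (ha : 0 < a) (ha1 : a < 1) (hs : a / 4 < s)
    {n : ℕ} (i : Fin n) :
    ∃ C > 0, ∀ τ : ℝ → ℝ, Measurable τ → (∀ r, |τ r| ≤ 1) →
      ∀ g : ℝ → ℂ, Continuous g → IntegrableOn g (Set.Ioi 0) →
      ∫⁻ r in Set.Ioo (0 : ℝ) 1, ‖radialOsc a i g r (τ r)‖ₑ ^ 2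
        ≤ ENNReal.ofReal C *
          ∫⁻ ρ in Set.Ioi (0 : ℝ), ENNReal.ofReal ((1 + ρ ^ 2) ^ s) * ‖g ρ‖ₑ ^ 2 := by
  obtain ⟨C₁, hC₁, h₁⟩ := exists_lintegral_main_le ha ha1 hs
  obtain ⟨C₂, hC₂, h₂⟩ := exists_lintegral_error_le (s := s) (by linarith)
  obtain ⟨A, B, D, hD, hAB⟩ := exists_rpow_mul_sphereCos_asymptotics i
  refine ⟨2 * (2 * (‖A‖ ^ 2 * C₁ + ‖B‖ ^ 2 * C₁) + D ^ 2 * C₂), by positivity,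
    fun τ hτ hτ1 g hg hgi => ?_⟩
  set W := ∫⁻ ρ in Set.Ioi (0 : ℝ), ENNReal.ofReal ((1 + ρ ^ 2) ^ s) * ‖g ρ‖ₑ ^ 2 with hW
  set X : ℝ → ℂ := fun r => ∫ ρ in Set.Ioi (0 : ℝ), osc a 1 τ r ρ * g ρ with hX
  set Y : ℝ → ℂ := fun r => ∫ ρ in Set.Ioi (0 : ℝ), osc a (-1) τ r ρ * g ρ with hY
  set Z : ℝ → ℝ≥0∞ := fun r => ∫⁻ ρ in Set.Ioi (0 : ℝ),
    ENNReal.ofReal (min 1 (r * ρ)⁻¹) * ‖g ρ‖ₑ with hZ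
  have hmo : ∀ κ, Measurable (Function.uncurry fun r ρ => osc a κ τ r ρ * g ρ) := fun κ =>
    (measurable_osc a κ hτ).mul (hg.measurable.comp measurable_snd)
  have hXm : Measurable X := measurable_integral_Ioi_right (hmo 1)
  have hYm : Measurable Y := measurable_integral_Ioi_right (hmo (-1))
  have hpt : ∀ r ∈ Set.Ioo (0 : ℝ) 1, ‖radialOsc a i g r (τ r)‖ₑ
      ≤ ‖A * X r + B * Y r‖ₑ + ENNReal.ofReal D * Z r := fun r hr =>
    enorm_radialOsc_le a i hD hAB hτ hg.measurable hgi hr.1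
  have hpt2 : ∀ r ∈ Set.Ioo (0 : ℝ) 1, ‖radialOsc a i g r (τ r)‖ₑ ^ 2
      ≤ 2 * (2 * (‖A‖ₑ ^ 2 * ‖X r‖ₑ ^ 2 + ‖B‖ₑ ^ 2 * ‖Y r‖ₑ ^ 2) +
        ENNReal.ofReal D ^ 2 * Z r ^ 2) := by
    intro r hr
    refine (pow_le_pow_left₀ zero_le (hpt r hr) 2).trans ((ENNReal_add_sq_le _ _).trans ?_)
    rw [mul_pow (ENNReal.ofReal D)]
    refine mul_le_mul' le_rfl (add_le_add ?_ le_rfl)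
    refine (pow_le_pow_left₀ zero_le (enorm_add_le _ _) 2).trans ((ENNReal_add_sq_le _ _).trans ?_)
    rw [enorm_mul, enorm_mul, mul_pow, mul_pow]
  refine (setLIntegral_mono' measurableSet_Ioo hpt2).trans ?_
  have hA2 : ‖A‖ₑ ^ 2 ≠ ⊤ := by finiteness
  have hB2 : ‖B‖ₑ ^ 2 ≠ ⊤ := by finiteness
  have hD2 : ENNReal.ofReal D ^ 2 ≠ ⊤ := by finiteness
  rw [lintegral_const_mul' _ _ (by finiteness), lintegral_add_left (by fun_prop),
    lintegral_const_mul' _ _ (by finiteness), lintegral_add_left (by fun_prop),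
    lintegral_const_mul' _ _ hA2, lintegral_const_mul' _ _ hB2, lintegral_const_mul' _ _ hD2]
  have k1 := h₁ 1 (by simp) τ hτ hτ1 g hg hgi
  have k2 := h₁ (-1) (by simp) τ hτ hτ1 g hg hgi
  have k3 := h₂ g hg
  have hA3 : ‖A‖ₑ = ENNReal.ofReal ‖A‖ := (ofReal_norm _).symm
  have hB3 : ‖B‖ₑ = ENNReal.ofReal ‖B‖ := (ofReal_norm _).symm
  calc _ ≤ 2 * (2 * (‖A‖ₑ ^ 2 * (ENNReal.ofReal C₁ * W) + ‖B‖ₑ ^ 2 * (ENNReal.ofReal C₁ * W)) +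
        ENNReal.ofReal D ^ 2 * (ENNReal.ofReal C₂ * W)) :=
        mul_le_mul' le_rfl (add_le_add (mul_le_mul' le_rfl (add_le_add (mul_le_mul' le_rfl k1)
          (mul_le_mul' le_rfl k2))) (mul_le_mul' le_rfl k3))
    _ = _ := by
        rw [hA3, hB3, ENNReal.ofReal_mul (by positivity), ENNReal.ofReal_add (by positivity) (by positivity),
          ENNReal.ofReal_mul (by positivity), ENNReal.ofReal_add (by positivity) (by positivity),
          ENNReal.ofReal_mul (by positivity), ENNReal.ofReal_mul (by positivity),
          ENNReal.ofReal_mul (by positivity), ENNReal.ofReal_pow (by positivity),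
          ENNReal.ofReal_pow (by positivity), ENNReal.ofReal_pow (by positivity)]
        simp only [ENNReal.ofReal_ofNat]
        ring

/-- A measurable choice among the values `q 0, …, q N` maximizing `Ψ k x` over `k ≤ N`. -/
def maxSelector (q : ℕ → ℝ) (Ψ : ℝ → ℝ → ℝ≥0∞) : ℕ → ℝ → ℝ
  | 0, _ => q 0
  | N + 1, x => if Ψ x (maxSelector q Ψ N x) ≤ Ψ x (q (N + 1)) then q (N + 1)
      else maxSelector q Ψ N x

theorem exists_maxSelector_eq (q : ℕ → ℝ) (Ψ : ℝ → ℝ → ℝ≥0∞) (N : ℕ) (x : ℝ) :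
    ∃ k, maxSelector q Ψ N x = q k := by
  induction N with
  | zero => exact ⟨0, rfl⟩
  | succ N ih =>
    rw [maxSelector]
    split_ifs
    · exact ⟨_, rfl⟩
    · exact ih

theorem measurable_maxSelector (q : ℕ → ℝ) (Ψ : ℝ → ℝ → ℝ≥0∞) (hΨ : ∀ k, Measurable (Ψ · (q k)))
    (N : ℕ) : Measurable (maxSelector q Ψ N) ∧ Measurable fun x => Ψ x (maxSelector q Ψ N x) := by
  induction N with
  | zero => exact ⟨measurable_const, hΨ 0⟩
  | succ N ih =>
    have hs := measurableSet_le ih.2 (hΨ (N + 1))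
    constructor
    · exact Measurable.ite hs measurable_const ih.1
    · have : (fun x => Ψ x (maxSelector q Ψ (N + 1) x)) = fun x =>
          if Ψ x (maxSelector q Ψ N x) ≤ Ψ x (q (N + 1)) then Ψ x (q (N + 1))
          else Ψ x (maxSelector q Ψ N x) := by
        funext x
        rw [maxSelector]
        split_ifs <;> rfl
      rw [this]
      exact Measurable.ite hs (hΨ (N + 1)) ih.2

theorem le_maxSelector (q : ℕ → ℝ) (Ψ : ℝ → ℝ → ℝ≥0∞) (x : ℝ) {k N : ℕ} (h : k ≤ N) :
    Ψ x (q k) ≤ Ψ x (maxSelector q Ψ N x) := by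
  induction N with
  | zero => obtain rfl : k = 0 := by omega
            exact le_rfl
  | succ N ih =>
    rw [maxSelector]
    rcases Nat.lt_or_ge N k with hk | hk
    · obtain rfl : k = N + 1 := by omega
      split_ifs with h1
      · exact le_rfl
      · exact (not_le.1 h1).le
    · split_ifs with h1
      · exact (ih hk).trans h1
      · exact ih hk

/-- Linearization of a maximal function: a bound that is uniform over all measurable choices of the
parameter bounds the supremum over a countable set of parameters. -/
theorem lintegral_iSup_sq_le_of_forall_measurable {m : Measure ℝ} {Ψ : ℝ → ℝ → ℝ≥0∞} {q : ℕ → ℝ}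
    (hq : ∀ k, |q k| ≤ 1) (hΨ : ∀ k, Measurable (Ψ · (q k))) {M : ℝ≥0∞}
    (hM : ∀ τ : ℝ → ℝ, Measurable τ → (∀ x, |τ x| ≤ 1) → ∫⁻ x, Ψ x (τ x) ^ 2 ∂m ≤ M) :
    ∫⁻ x, (⨆ k, Ψ x (q k)) ^ 2 ∂m ≤ M := by
  have hmono : Monotone fun N x => Ψ x (maxSelector q Ψ N x) ^ 2 := by
    refine monotone_nat_of_le_succ fun N x => ?_
    refine pow_le_pow_left₀ zero_le ?_ 2
    obtain h | h := le_or_gt (Ψ x (maxSelector q Ψ N x)) (Ψ x (q (N + 1)))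
    · rw [maxSelector, if_pos h]; exact h
    · rw [maxSelector, if_neg (not_le.2 h)]
  have hle : ∀ x, (⨆ k, Ψ x (q k)) ^ 2 ≤ ⨆ N, Ψ x (maxSelector q Ψ N x) ^ 2 := by
    intro x
    rw [ENNReal.iSup_pow]
    exact iSup_mono fun k => pow_le_pow_left₀ zero_le (le_maxSelector q Ψ x le_rfl) 2
  refine (lintegral_mono hle).trans ?_
  rw [lintegral_iSup (fun N => (measurable_maxSelector q Ψ hΨ N).2.pow_const 2) hmono]
  refine iSup_le fun N => hM _ (measurable_maxSelector q Ψ hΨ N).1 fun x => ?_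
  obtain ⟨k, hk⟩ := exists_maxSelector_eq q Ψ N x
  rw [hk]
  exact hq k

theorem exists_abs_sphereKernel_le {n : ℕ} (i : Fin n) :
    ∃ K, ∀ z : ℝ, 0 < z → |sphereKernel i z| ≤ K := by
  obtain ⟨A, B, D, hD, hAB⟩ := exists_rpow_mul_sphereCos_asymptotics i
  refine ⟨D + ‖A‖ + ‖B‖, fun z hz => ?_⟩
  have h := (hAB z hz).trans (mul_le_of_le_one_right hD.le (min_le_left _ _))
  have h1 : ‖A * Complex.exp (Complex.I * z)‖ = ‖A‖ := by
    rw [norm_mul, mul_comm Complex.I, Complex.norm_exp_ofReal_mul_I, mul_one]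
  have h2 : ‖B * Complex.exp (-(Complex.I * z))‖ = ‖B‖ := by
    rw [norm_mul, ← mul_neg, mul_comm Complex.I, ← Complex.ofReal_neg,
      Complex.norm_exp_ofReal_mul_I, mul_one]
  rw [← Real.norm_eq_abs, ← Complex.norm_real, sphereKernel]
  have h3 := norm_sub_norm_le (((z ^ (((n:ℝ)-1)/2) * sphereCos i z : ℝ) : ℂ) -
    A * Complex.exp (Complex.I * z)) (B * Complex.exp (-(Complex.I * z)))
  have h4 := norm_sub_norm_le (((z ^ (((n:ℝ)-1)/2) * sphereCos i z : ℝ) : ℂ))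
    (A * Complex.exp (Complex.I * z))
  linarith

theorem continuous_radialOsc {n : ℕ} (a : ℝ) (i : Fin n) {g : ℝ → ℂ} (hg : Measurable g)
    (hgi : IntegrableOn g (Set.Ioi 0)) {r : ℝ} (hr : 0 < r) : Continuous (radialOsc a i g r) := by
  obtain ⟨K, hK⟩ := exists_abs_sphereKernel_le i
  have hk := measurable_sphereKernel i
  refine continuous_of_dominated (bound := fun ρ => K * ‖g ρ‖)
    (fun t => Measurable.aestronglyMeasurable (by fun_prop)) (fun t => ?_)
    (Integrable.const_mul (Integrable.norm hgi) K)
    (Filter.Eventually.of_forall fun ρ => by fun_prop)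
  refine (ae_restrict_mem measurableSet_Ioi).mono fun ρ (hρ : 0 < ρ) => ?_
  rw [norm_mul, norm_mul, mul_comm Complex.I, Complex.norm_exp_ofReal_mul_I, one_mul,
    Complex.norm_real, Real.norm_eq_abs]
  exact mul_le_mul_of_nonneg_right (hK _ (mul_pos hr hρ)) (norm_nonneg _)

theorem measurable_radialOsc {n : ℕ} (a : ℝ) (i : Fin n) {g : ℝ → ℂ} (hg : Measurable g) (t : ℝ) :
    Measurable fun r => radialOsc a i g r t := by
  have hk := measurable_sphereKernel i
  refine measurable_integral_Ioi_right (F := fun r ρ => ((sphereKernel i (r * ρ) : ℝ) : ℂ) *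
    (Complex.exp (Complex.I * ((t * ρ ^ a : ℝ) : ℂ)) * g ρ)) ?_
  unfold Function.uncurry
  fun_prop

instance : Nonempty (Set.Ioo (-1 : ℝ) 1) := ⟨⟨0, by norm_num⟩⟩

/-- A dense sequence in `(-1, 1)`. -/
def denseTimes (k : ℕ) : ℝ := (TopologicalSpace.denseSeq (Set.Ioo (-1 : ℝ) 1) k : ℝ)

theorem enorm_radialOsc_le_iSup {n : ℕ} (a : ℝ) (i : Fin n) {g : ℝ → ℂ} (hg : Measurable g)
    (hgi : IntegrableOn g (Set.Ioi 0)) {r : ℝ} (hr : 0 < r) (t : Set.Ioo (-1 : ℝ) 1) :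
    ‖radialOsc a i g r t‖ₑ ≤ ⨆ k, ‖radialOsc a i g r (denseTimes k)‖ₑ := by
  have hc : IsClosed {t : Set.Ioo (-1 : ℝ) 1 |
      ‖radialOsc a i g r t‖ₑ ≤ ⨆ k, ‖radialOsc a i g r (denseTimes k)‖ₑ} :=
    isClosed_le ((continuous_radialOsc a i hg hgi hr).comp continuous_subtype_val).enorm
      continuous_const
  exact (TopologicalSpace.denseRange_denseSeq (Set.Ioo (-1 : ℝ) 1)).induction_on t hc fun k =>
    le_iSup (fun k => ‖radialOsc a i g r (denseTimes k)‖ₑ) k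

theorem rpow_half_sub_one_sq {n : ℕ} (hn : 1 ≤ n) {ρ : ℝ} (hρ : 0 < ρ) :
    (ρ ^ (((n : ℝ) - 1) / 2)) ^ 2 = ρ ^ (n - 1) := by
  rw [← Real.rpow_natCast, ← Real.rpow_mul hρ.le, ← Real.rpow_natCast]
  congr 1
  push_cast [hn]
  ring

theorem ofReal_iSup_Sosc_le {n : ℕ} {a : ℝ} (ha : 0 < a) (i : Fin n)
    {f : EuclideanSpace ℝ (Fin n) → ℂ}
    (hf : ∀ x y : EuclideanSpace ℝ (Fin n), ‖x‖ = ‖y‖ → f x = f y)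
    {G : EuclideanSpace ℝ (Fin n) → ℂ} (hGc : Continuous G) (hGi : Integrable G)
    (hgc : Continuous (radialProfile i G))
    (hgi : IntegrableOn (radialProfile i G) (Set.Ioi 0))
    (hG : ∀ ξ, FT n f ξ = G ξ) {x : EuclideanSpace ℝ (Fin n)} (hx : x ≠ 0) :
    ENNReal.ofReal (⨆ t : Set.Ioo (-1 : ℝ) 1, ‖Sosc n a f x t‖) ≤
      ENNReal.ofReal (((2 * π) ^ n)⁻¹ * (‖x‖ ^ (((n : ℝ) - 1) / 2))⁻¹) *
        ⨆ k, ‖radialOsc a i (radialProfile i G) ‖x‖ (denseTimes k)‖ₑ := by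
  set R := ENNReal.ofReal (((2 * π) ^ n)⁻¹ * (‖x‖ ^ (((n : ℝ) - 1) / 2))⁻¹) *
        ⨆ k, ‖radialOsc a i (radialProfile i G) ‖x‖ (denseTimes k)‖ₑ with hR
  by_cases hT : R = ⊤
  · rw [hT]; exact le_top
  refine ENNReal.ofReal_le_of_le_toReal (Real.iSup_le (fun t => ?_) ENNReal.toReal_nonneg)
  rw [← toReal_enorm]
  refine ENNReal.toReal_mono hT ?_
  rw [Sosc_eq_radialOsc ha i hf hGc hGi hG hx, enorm_mul, hR]
  refine mul_le_mul' ?_ (enorm_radialOsc_le_iSup a i hgc.measurable hgi (norm_pos_iff.2 hx) t)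
  rw [← ofReal_norm, Complex.norm_real, Real.norm_of_nonneg (by positivity)]

theorem ofReal_integral_iSup_Sosc_le {n : ℕ} (hn : 1 ≤ n) {a : ℝ} (ha : 0 < a) (i : Fin n)
    {f : EuclideanSpace ℝ (Fin n) → ℂ}
    (hf : ∀ x y : EuclideanSpace ℝ (Fin n), ‖x‖ = ‖y‖ → f x = f y)
    {G : EuclideanSpace ℝ (Fin n) → ℂ} (hGc : Continuous G) (hGi : Integrable G)
    (hgc : Continuous (radialProfile i G))
    (hgi : IntegrableOn (radialProfile i G) (Set.Ioi 0))
    (hG : ∀ ξ, FT n f ξ = G ξ) :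
    ENNReal.ofReal (∫ x in Metric.ball (0 : EuclideanSpace ℝ (Fin n)) 1,
          (⨆ t : Set.Ioo (-1 : ℝ) 1, ‖Sosc n a f x t‖) ^ 2) ≤
      sphereMeasure n Set.univ * (ENNReal.ofReal ((((2 * π) ^ n)⁻¹) ^ 2) *
        ∫⁻ r in Set.Ioo (0 : ℝ) 1,
          (⨆ k, ‖radialOsc a i (radialProfile i G) r (denseTimes k)‖ₑ) ^ 2) := by
  have : Nontrivial (EuclideanSpace ℝ (Fin n)) := by
    have : Nonempty (Fin n) := ⟨i⟩
    infer_instance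
  set U : ℝ → ℝ≥0∞ := fun r => ⨆ k, ‖radialOsc a i (radialProfile i G) r (denseTimes k)‖ₑ with hU
  have hUm : Measurable U := Measurable.iSup fun k =>
    (measurable_radialOsc a i hgc.measurable (denseTimes k)).enorm
  set h : ℝ → ℝ≥0∞ := (Set.Iio (1 : ℝ)).indicator fun ρ =>
    (ENNReal.ofReal (((2 * π) ^ n)⁻¹ * (ρ ^ (((n : ℝ) - 1) / 2))⁻¹) * U ρ) ^ 2 with hh
  have hhm : Measurable h := Measurable.indicator (by fun_prop) measurableSet_Iio
  have key : ∀ ρ ∈ Set.Ioi (0 : ℝ), ENNReal.ofReal (ρ ^ (n - 1)) * h ρ =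
      (Set.Ioo (0 : ℝ) 1).indicator (fun r => ENNReal.ofReal ((((2 * π) ^ n)⁻¹) ^ 2) * U r ^ 2) ρ := by
    intro ρ (hρ : 0 < ρ)
    by_cases h1 : ρ < 1
    · rw [hh, Set.indicator_of_mem (show ρ ∈ Set.Iio 1 from h1), Set.indicator_of_mem (show ρ ∈ Set.Ioo 0 1 from ⟨hρ, h1⟩),
        mul_pow, ← mul_assoc, ← ENNReal.ofReal_pow (by positivity),
        ← ENNReal.ofReal_mul (by positivity), ← rpow_half_sub_one_sq hn hρ]
      congr 2
      have : ρ ^ (((n : ℝ) - 1) / 2) ≠ 0 := by positivity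
      field_simp
    · rw [hh, Set.indicator_of_notMem (show ρ ∉ Set.Iio 1 from h1),
        Set.indicator_of_notMem fun h => h1 h.2, mul_zero]
  calc _ ≤ ‖∫ x in Metric.ball (0 : EuclideanSpace ℝ (Fin n)) 1,
          (⨆ t : Set.Ioo (-1 : ℝ) 1, ‖Sosc n a f x t‖) ^ 2‖ₑ := Real.ofReal_le_enorm _
    _ ≤ ∫⁻ x in Metric.ball (0 : EuclideanSpace ℝ (Fin n)) 1,
          ‖(⨆ t : Set.Ioo (-1 : ℝ) 1, ‖Sosc n a f x t‖) ^ 2‖ₑ := enorm_integral_le_lintegral_enorm _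
    _ ≤ ∫⁻ x in Metric.ball (0 : EuclideanSpace ℝ (Fin n)) 1, h ‖x‖ := by
        refine lintegral_mono_ae ?_
        filter_upwards [ae_restrict_mem Metric.isOpen_ball.measurableSet,
          ae_restrict_of_ae (Measure.ae_ne volume (0 : EuclideanSpace ℝ (Fin n)))] with x hx hx0
        have hS : 0 ≤ ⨆ t : Set.Ioo (-1 : ℝ) 1, ‖Sosc n a f x t‖ := Real.iSup_nonneg fun t => norm_nonneg _
        rw [hh, Set.indicator_of_mem (show ‖x‖ ∈ Set.Iio 1 by simpa using hx),
          Real.enorm_of_nonneg (by positivity), ENNReal.ofReal_pow hS]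
        exact pow_le_pow_left₀ zero_le (ofReal_iSup_Sosc_le ha i hf hGc hGi hgc hgi hG hx0) 2
    _ ≤ ∫⁻ x : EuclideanSpace ℝ (Fin n), h ‖x‖ := setLIntegral_le_lintegral _ _
    _ = sphereMeasure n Set.univ * ∫⁻ ρ in Set.Ioi (0 : ℝ), ENNReal.ofReal (ρ ^ (n - 1)) * h ρ :=
        lintegral_fun_norm_eq hn hhm
    _ = _ := by
        rw [setLIntegral_congr_fun measurableSet_Ioi key, lintegral_indicator measurableSet_Ioo,
          Measure.restrict_restrict measurableSet_Ioo, Set.inter_eq_left.2 Set.Ioo_subset_Ioi_self,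
          lintegral_const_mul' _ _ ENNReal.ofReal_ne_top]

theorem ofReal_integral_weight_eq {n : ℕ} (hn : 1 ≤ n) {s : ℝ} (i : Fin n)
    {G : EuclideanSpace ℝ (Fin n) → ℂ} (hGc : Continuous G)
    (hGr : ∀ ξ η : EuclideanSpace ℝ (Fin n), ‖ξ‖ = ‖η‖ → G ξ = G η)
    (hGs : Integrable (fun ξ => (1 + ‖ξ‖ ^ 2) ^ s * ‖G ξ‖ ^ 2)) :
    ENNReal.ofReal (∫ ξ, (1 + ‖ξ‖ ^ 2) ^ s * ‖G ξ‖ ^ 2) =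
      sphereMeasure n Set.univ * ∫⁻ ρ in Set.Ioi (0 : ℝ),
        ENNReal.ofReal ((1 + ρ ^ 2) ^ s) * ‖radialProfile i G ρ‖ₑ ^ 2 := by
  have hsm : Measurable fun ρ : ℝ => (EuclideanSpace.single i ρ : EuclideanSpace ℝ (Fin n)) :=
    (isometry_iff_dist_eq.2 fun x y => PiLp.dist_single_same 2 (fun _ => ℝ) i x y).continuous.measurable
  have hm : Measurable fun ρ : ℝ =>
      ENNReal.ofReal ((1 + ρ ^ 2) ^ s * ‖G (EuclideanSpace.single i ρ)‖ ^ 2) := by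
    have := hGc.measurable.comp hsm
    have h2 : Measurable fun ρ : ℝ => G (EuclideanSpace.single i ρ) := this
    fun_prop
  rw [ofReal_integral_eq_lintegral_ofReal hGs (Filter.Eventually.of_forall fun ξ => by positivity)]
  have h1 : ∀ ξ : EuclideanSpace ℝ (Fin n), ENNReal.ofReal ((1 + ‖ξ‖ ^ 2) ^ s * ‖G ξ‖ ^ 2) =
      (fun ρ : ℝ => ENNReal.ofReal ((1 + ρ ^ 2) ^ s * ‖G (EuclideanSpace.single i ρ)‖ ^ 2)) ‖ξ‖ := by
    intro ξ
    simp only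
    rw [hGr ξ (EuclideanSpace.single i ‖ξ‖) (by rw [PiLp.norm_single, norm_norm])]
  simp only [h1]
  rw [lintegral_fun_norm_eq hn hm]
  congr 1
  refine setLIntegral_congr_fun measurableSet_Ioi fun ρ (hρ : 0 < ρ) => ?_
  rw [← ofReal_norm, ← ENNReal.ofReal_pow (norm_nonneg _), ← ENNReal.ofReal_mul (by positivity),
    ← ENNReal.ofReal_mul (by positivity), radialProfile, norm_mul, mul_pow, Complex.norm_real,
    Real.norm_of_nonneg (by positivity), rpow_half_sub_one_sq hn hρ]
  congr 1
  ring

theorem stmt6 (a : ℝ) (ha : 0 < a) (ha1 : a < 1) (n : ℕ) (hn : 2 ≤ n)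
    (s : ℝ) (hs : a / 4 < s) :
    ∃ C > 0, ∀ f : EuclideanSpace ℝ (Fin n) → ℂ,
      ContDiff ℝ (⊤ : ℕ∞) f → HasCompactSupport f → 0 ∉ tsupport f →
      (∀ x y : EuclideanSpace ℝ (Fin n), ‖x‖ = ‖y‖ → f x = f y) →
      (∫ x in Metric.ball (0 : EuclideanSpace ℝ (Fin n)) 1,
          (⨆ t : Set.Ioo (-1 : ℝ) 1, ‖Sosc n a f x t‖) ^ 2) ^ (1/2 : ℝ)
        ≤ C * (∫ ξ, (1 + ‖ξ‖ ^ 2) ^ s * ‖FT n f ξ‖ ^ 2) ^ (1/2 : ℝ) := by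
  obtain ⟨C, hC, hmain⟩ := exists_lintegral_radialOsc_le ha ha1 hs (⟨0, by omega⟩ : Fin n)
  set i : Fin n := ⟨0, by omega⟩
  set c : ℝ := (((2 * π) ^ n)⁻¹) ^ 2 with hc
  have hc0 : 0 < c := by positivity
  refine ⟨(c * C) ^ (1 / 2 : ℝ), by positivity, fun f hf hfc _ hrad => ?_⟩
  have hn1 : 1 ≤ n := by omega
  obtain ⟨G, hG⟩ := exists_schwartz_eq_FT hf hfc
  have hgc := continuous_radialProfile hn1 i G.continuous
  have hgi := integrableOn_radialProfile hn1 i G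
  have h1 := ofReal_integral_iSup_Sosc_le hn1 ha i hrad G.continuous G.integrable hgc hgi hG
  have h2 := ofReal_integral_weight_eq hn1 i G.continuous
    (fun ξ η h => by rw [← hG, ← hG]; exact FT_eq_of_norm_eq hrad h)
    (integrable_rpow_mul_sq_norm_schwartz G (s := s) (by linarith))
  have hq : ∀ k, |denseTimes k| ≤ 1 := fun k =>
    abs_le.2 ⟨(TopologicalSpace.denseSeq (Set.Ioo (-1 : ℝ) 1) k).2.1.le,
      (TopologicalSpace.denseSeq (Set.Ioo (-1 : ℝ) 1) k).2.2.le⟩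
  have h3 := lintegral_iSup_sq_le_of_forall_measurable
    (Ψ := fun r t => ‖radialOsc a i (radialProfile i G) r t‖ₑ) hq
    (fun k => (measurable_radialOsc a i hgc.measurable (denseTimes k)).enorm)
    (fun τ hτ hτ1 => hmain τ hτ hτ1 _ hgc hgi)
  simp only [hG]
  set R := ∫ ξ, (1 + ‖ξ‖ ^ 2) ^ s * ‖G ξ‖ ^ 2 with hR
  have hR0 : 0 ≤ R := integral_nonneg fun ξ => by positivity
  have h4 := h1.trans (mul_le_mul' le_rfl (mul_le_mul' le_rfl h3))
  rw [← mul_assoc (ENNReal.ofReal _), mul_left_comm, ← h2, ← ENNReal.ofReal_mul hc0.le,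
    ← ENNReal.ofReal_mul (by positivity)] at h4
  have h5 := (ENNReal.ofReal_le_ofReal_iff (by positivity)).1 h4
  rw [← Real.mul_rpow (by positivity) hR0]
  exact Real.rpow_le_rpow (integral_nonneg fun x => by positivity) h5 (by norm_num)
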